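/- Minimax lower bound (dense case): There exist constants c₁, c₂ > 0 (depending only on the constant c) such that for every n ≥ 1, every r ∈ {1,…,m}, every ρ > 0, every a > 0 and every p ∈ [2,∞), setting δₙ⁽¹⁾(r,ρ,a) := max_{l₀ ≤ l ≤ m} [ (a²·(min(r,l))·l/n) ∧ (ρ²/λ_l) ∧ ( (1/(p−1))·(1/Q_p²)·(a²·min(r,l)/l)·m^{−4/p} ) ], the following holds: for every estimator Ŝₙ (a measurable map from (V×V×ℝ)ⁿ to 𝒮_V), sup_{P ∈ 𝒫_{r,ρ,a}} P^{⊗n}{ ‖Ŝₙ((X₁,X₁',Y₁),…,(Xₙ,Xₙ',Yₙ)) − S_P‖²_{L₂(Π²)} ≥ c₁·δₙ⁽¹⁾(r,ρ,a) } ≥ c₂. -/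

import Mathlib

open MeasureTheory Finset
open scoped ENNReal NNReal

noncomputable section

/-- Sample space for one observation: a pair of vertices `(X, X')` and a response `Y`. -/
abbrev Obs (m : ℕ) := Fin m × Fin m × ℝ

/-- Squared Hilbert–Schmidt (Frobenius) norm of a kernel. -/
def hsNormSq {m : ℕ} (S : Matrix (Fin m) (Fin m) ℝ) : ℝ := ∑ u, ∑ v, (S u v) ^ 2

/-- Squared `L₂(Π²)` norm: `‖S‖²_{L₂(Π²)} = m⁻² ‖S‖₂²`. -/
def l2PiSq {m : ℕ} (S : Matrix (Fin m) (Fin m) ℝ) : ℝ := hsNormSq S / (m : ℝ) ^ 2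

/-- Squared Sobolev (Hilbert–Schmidt) norm `‖W^{1/2}S‖₂² = ∑ₖ λₖ ‖S φₖ‖²`,
expressed through the eigendata `(lam, φ)` of `W` (indexed by `1,…,m`). -/
def sobolevHSSq {m : ℕ} (lam : ℕ → ℝ) (φ : ℕ → Fin m → ℝ)
    (S : Matrix (Fin m) (Fin m) ℝ) : ℝ :=
  ∑ k ∈ Finset.Icc 1 m, lam k * ∑ u, (S.mulVec (φ k) u) ^ 2

/-- `φ₁,…,φ_m` are orthonormal in `ℝ^V` (Euclidean inner product). -/
def OrthonormalFamily (m : ℕ) (φ : ℕ → Fin m → ℝ) : Prop :=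
  ∀ j ∈ Finset.Icc 1 m, ∀ k ∈ Finset.Icc 1 m,
    (∑ v, φ j v * φ k v) = if j = k then (1 : ℝ) else 0

/-- Eigendata of the positive semidefinite kernel `W`: orthonormal eigenfunctions `φ`,
nonnegative nondecreasing eigenvalues `lam` (indexed by `1,…,m`), `k0` the smallest index
of a positive eigenvalue, and `λ_{k+1} ≤ c·λ_k` for `k ≥ k0`. -/
structure IsEigenData (m : ℕ) (c : ℝ) (lam : ℕ → ℝ) (φ : ℕ → Fin m → ℝ) (k0 : ℕ) : Prop where
  orth : OrthonormalFamily m φ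
  nonneg : ∀ k ∈ Finset.Icc 1 m, 0 ≤ lam k
  mono : ∀ k l : ℕ, 1 ≤ k → k ≤ l → l ≤ m → lam k ≤ lam l
  k0_mem : 1 ≤ k0 ∧ k0 ≤ m ∧ 0 < lam k0
  k0_min : ∀ k ∈ Finset.Icc 1 m, 0 < lam k → k0 ≤ k
  ratio : ∀ k : ℕ, k0 ≤ k → k + 1 ≤ m → lam (k + 1) ≤ c * lam k

/-- The design `(X, X')` is uniformly distributed on `V × V`. -/
def UniformDesign (m : ℕ) (P : Measure (Obs m)) : Prop :=
  ∀ u v : Fin m, P {z : Obs m | z.1 = u ∧ z.2.1 = v} = ((m : ℝ≥0∞) ^ 2)⁻¹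

/-- The regression kernel `S_P(u,v) = m²·E_P[Y·1{X=u, X'=v}] = E_P(Y | X=u, X'=v)`. -/
def regKernel (m : ℕ) (P : Measure (Obs m)) : Matrix (Fin m) (Fin m) ℝ :=
  Matrix.of fun u v =>
    (m : ℝ) ^ 2 * ∫ z : Obs m, (if z.1 = u ∧ z.2.1 = v then z.2.2 else 0) ∂P

/-- Membership in the class `𝒫_{r,ρ,a}` of sampling distributions. -/
def MemP (m : ℕ) (r : ℕ) (ρ a : ℝ) (lam : ℕ → ℝ) (φ : ℕ → Fin m → ℝ)
    (P : Measure (Obs m)) : Prop :=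
  IsProbabilityMeasure P ∧ UniformDesign m P ∧ (∀ᵐ z ∂P, |z.2.2| ≤ a) ∧
    (regKernel m P).IsSymm ∧ (regKernel m P).rank ≤ r ∧
    sobolevHSSq lam φ (regKernel m P) ≤ ρ ^ 2 * (m : ℝ) ^ 2

/-- `Q_p := max_{1≤j≤m} ‖√m·φ_j‖²_{L_p(Π)}`. -/
def Qp (m : ℕ) (p : ℝ) (φ : ℕ → Fin m → ℝ) : ℝ :=
  ⨆ j ∈ Finset.Icc 1 m, ((∑ v, |Real.sqrt m * φ j v| ^ p) / m) ^ (2 / p)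

/-- The quantity `δₙ⁽¹⁾(r,ρ,a)` (with value in `ℝ≥0∞`, so that `ρ²/λ_l = ∞` when `λ_l = 0`). -/
def delta1 (m n r l0 : ℕ) (ρ a p Q : ℝ) (lam : ℕ → ℝ) : ℝ≥0∞ :=
  ⨆ l ∈ Finset.Icc l0 m,
    min (ENNReal.ofReal (a ^ 2 * (min r l : ℝ) * (l : ℝ) / n))
      (min (ENNReal.ofReal (ρ ^ 2) / ENNReal.ofReal (lam l))
        (ENNReal.ofReal
          ((1 / (p - 1)) * (1 / Q ^ 2) * (a ^ 2 * (min r l : ℝ) / l) *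
            ((m : ℝ) ^ ((4 : ℝ) / p))⁻¹)))

def sgn (b : Bool) : ℝ := if b then 1 else -1

lemma sgn_sq (b : Bool) : sgn b ^ 2 = 1 := by cases b <;> simp [sgn]

lemma sgn_abs (b : Bool) : |sgn b| = 1 := by cases b <;> simp [sgn]

section tail
variable {ι : Type*} [Fintype ι] [DecidableEq ι]

lemma sum_exp_le (x : ι → ℝ) (t : ℝ) :
    ∑ σ : ι → Bool, Real.exp (t * ∑ e, sgn (σ e) * x e)
      ≤ 2 ^ (Fintype.card ι) * Real.exp (t ^ 2 * (∑ e, x e ^ 2) / 2) := by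
  have h1 : ∀ σ : ι → Bool, Real.exp (t * ∑ e, sgn (σ e) * x e)
      = ∏ e, Real.exp (t * (sgn (σ e) * x e)) := by
    intro σ
    rw [← Real.exp_sum, Finset.mul_sum]
  simp_rw [h1]
  have h2 := Finset.prod_univ_sum (fun _ : ι => (Finset.univ : Finset Bool))
    (fun e b => Real.exp (t * (sgn b * x e)))
  rw [Fintype.piFinset_univ] at h2
  rw [← h2]
  have h3 : ∀ e : ι, ∑ b : Bool, Real.exp (t * (sgn b * x e)) ≤ 2 * Real.exp ((t * x e) ^ 2 / 2) := by
    intro e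
    have := Real.cosh_le_exp_half_sq (t * x e)
    rw [Real.cosh_eq] at this
    simp [sgn]
    linarith
  calc _ ≤ ∏ e : ι, (2 * Real.exp ((t * x e) ^ 2 / 2)) := by
        apply Finset.prod_le_prod
        · intro i _; positivity
        · intro i _; exact h3 i
    _ = _ := by
        rw [Finset.prod_mul_distrib, ← Real.exp_sum]
        simp only [Finset.prod_const, Finset.card_univ]
        congr 2
        rw [Finset.mul_sum, Finset.sum_div]
        congr 1; ext e; ring

lemma tail_one (x : ι → ℝ) {t p : ℝ} (ht : 0 < t) (hp : 2 ≤ p) :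
    (((Finset.univ : Finset (ι → Bool)).filter fun σ => t < ∑ e, sgn (σ e) * x e).card : ℝ)
      ≤ 2 ^ (Fintype.card ι) * (p * (∑ e, x e ^ 2) / t ^ 2) ^ (p / 2) := by
  set v := ∑ e, x e ^ 2 with hv
  have hv0 : 0 ≤ v := Finset.sum_nonneg fun i _ => sq_nonneg _
  rcases hv0.eq_or_lt with h0 | hpos
  · have hx : ∀ e, x e = 0 := by
      intro e
      have := (Finset.sum_eq_zero_iff_of_nonneg (fun i _ => sq_nonneg (x i))).1 h0.symm e (Finset.mem_univ e)
      simpa using this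
    have : ((Finset.univ : Finset (ι → Bool)).filter fun σ => t < ∑ e, sgn (σ e) * x e) = ∅ := by
      apply Finset.filter_false_of_mem
      intro σ _
      simp [hx, ht.le]
    rw [this]
    simp
    positivity
  · have hA : (((Finset.univ : Finset (ι → Bool)).filter fun σ => t < ∑ e, sgn (σ e) * x e).card : ℝ)
        * Real.exp (t / v * t) ≤ 2 ^ (Fintype.card ι) * Real.exp ((t / v) ^ 2 * v / 2) := by
      refine le_trans ?_ (sum_exp_le x (t / v))
      rw [← nsmul_eq_mul]
      refine le_trans (Finset.card_nsmul_le_sum _ (fun σ => Real.exp (t / v * ∑ e, sgn (σ e) * x e)) _ ?_) ?_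
      · intro σ hσ
        simp only [Finset.mem_filter] at hσ
        apply Real.exp_le_exp.2
        exact mul_le_mul_of_nonneg_left hσ.2.le (by positivity)
      · exact Finset.sum_le_sum_of_subset_of_nonneg (Finset.filter_subset _ _) (fun _ _ _ => (Real.exp_pos _).le)
    have hB : Real.exp ((t / v) ^ 2 * v / 2) = Real.exp (t / v * t) * Real.exp (-(t ^ 2 / (2 * v))) := by
      rw [← Real.exp_add]; congr 1; field_simp; ring
    have hC : Real.exp (-(t ^ 2 / (2 * v))) ≤ (p * v / t ^ 2) ^ (p / 2) := by
      set y := t ^ 2 / (p * v) with hy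
      have hy0 : 0 < y := by positivity
      have e1 : p * v / t ^ 2 = y⁻¹ := by rw [hy, inv_div]
      have e2 : -(t ^ 2 / (2 * v)) = (-y) * (p / 2) := by rw [hy]; field_simp
      rw [e1, e2, Real.exp_mul]
      apply Real.rpow_le_rpow (Real.exp_pos _).le _ (by positivity)
      rw [Real.exp_neg]
      apply inv_anti₀ hy0
      linarith [Real.add_one_le_exp y]
    rw [hB] at hA
    have hE := Real.exp_pos (t / v * t)
    have : (((Finset.univ : Finset (ι → Bool)).filter fun σ => t < ∑ e, sgn (σ e) * x e).card : ℝ)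
      ≤ 2 ^ (Fintype.card ι) * Real.exp (-(t ^ 2 / (2 * v))) := by
      by_contra hcon
      push Not at hcon
      nlinarith [mul_lt_mul_of_pos_right hcon hE]
    exact this.trans (mul_le_mul_of_nonneg_left hC (by positivity))

lemma tail_abs (x : ι → ℝ) {t p : ℝ} (ht : 0 < t) (hp : 2 ≤ p) :
    (((Finset.univ : Finset (ι → Bool)).filter fun σ => t < |∑ e, sgn (σ e) * x e|).card : ℝ)
      ≤ 2 * (2 ^ (Fintype.card ι) * (p * (∑ e, x e ^ 2) / t ^ 2) ^ (p / 2)) := by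
  have h1 := tail_one x ht hp
  have h2 := tail_one (fun e => - x e) ht hp
  simp only [neg_sq] at h2
  have : ((Finset.univ : Finset (ι → Bool)).filter fun σ => t < |∑ e, sgn (σ e) * x e|)
      ⊆ ((Finset.univ : Finset (ι → Bool)).filter fun σ => t < ∑ e, sgn (σ e) * x e) ∪
        ((Finset.univ : Finset (ι → Bool)).filter fun σ => t < ∑ e, sgn (σ e) * - x e) := by
    intro σ hσ
    simp only [Finset.mem_filter, Finset.mem_union, Finset.mem_univ, true_and, mul_neg,
      Finset.sum_neg_distrib] at hσ ⊢
    exact lt_abs.1 hσ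
  have h3 := (Finset.card_le_card this).trans (Finset.card_union_le _ _)
  have h4 : (((Finset.univ : Finset (ι → Bool)).filter fun σ => t < |∑ e, sgn (σ e) * x e|).card : ℝ)
    ≤ (((Finset.univ : Finset (ι → Bool)).filter fun σ => t < ∑ e, sgn (σ e) * x e).card : ℝ) +
      (((Finset.univ : Finset (ι → Bool)).filter fun σ => t < ∑ e, sgn (σ e) * - x e).card : ℝ) := by
    exact_mod_cast h3
  linarith

lemma tail_all {K : Type*} [Fintype K] (x : K → ι → ℝ) {p G t : ℝ} (hp : 2 ≤ p) (hG : 0 < G)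
    (ht : 0 < t) (htG : t ^ 2 = 40 * p * G ^ 2)
    (h : ∑ k, (∑ e, x k e ^ 2) ^ (p / 2) ≤ G ^ p) :
    (((Finset.univ : Finset (ι → Bool)).filter fun σ => ∃ k, t < |∑ e, sgn (σ e) * x k e|).card : ℝ)
      ≤ 2 ^ (Fintype.card ι) / 20 := by
  classical
  have hsub : ((Finset.univ : Finset (ι → Bool)).filter fun σ => ∃ k, t < |∑ e, sgn (σ e) * x k e|)
      ⊆ (Finset.univ : Finset K).biUnion fun k =>
        ((Finset.univ : Finset (ι → Bool)).filter fun σ => t < |∑ e, sgn (σ e) * x k e|) := by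
    intro σ hσ
    simpa using hσ
  have h1 := (Finset.card_le_card hsub).trans Finset.card_biUnion_le
  have h2 : (((Finset.univ : Finset (ι → Bool)).filter fun σ => ∃ k, t < |∑ e, sgn (σ e) * x k e|).card : ℝ)
     ≤ ∑ k, (((Finset.univ : Finset (ι → Bool)).filter fun σ => t < |∑ e, sgn (σ e) * x k e|).card : ℝ) := by
    exact_mod_cast h1
  refine h2.trans ((Finset.sum_le_sum fun k _ => tail_abs (x k) ht hp).trans ?_)
  rw [← Finset.mul_sum, ← Finset.mul_sum]
  have h3 : ∀ k, (p * (∑ e, x k e ^ 2) / t ^ 2) ^ (p / 2)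
      = (∑ e, x k e ^ 2) ^ (p / 2) * ((1/40) ^ (p / 2) * (G ^ p)⁻¹) := by
    intro k
    have hv0 : 0 ≤ ∑ e, x k e ^ 2 := Finset.sum_nonneg fun i _ => sq_nonneg _
    have hGp : G ^ p = (G ^ 2) ^ (p / 2) := by
      rw [← Real.rpow_natCast, ← Real.rpow_mul hG.le]; congr 1; push_cast; ring
    rw [htG, hGp, ← Real.inv_rpow (by positivity), ← Real.mul_rpow (by positivity) (by positivity),
      ← Real.mul_rpow hv0 (by positivity)]
    congr 1
    field_simp
  simp_rw [h3]
  rw [← Finset.sum_mul]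
  have hGp : 0 < G ^ p := Real.rpow_pos_of_pos hG _
  have h4 : ((1:ℝ)/40) ^ (p / 2) ≤ 1 / 40 := by
    have := Real.rpow_le_rpow_of_exponent_ge (x := (1:ℝ)/40) (by norm_num) (by norm_num) (show (1:ℝ) ≤ p / 2 by linarith)
    simpa using this
  have h5 : (∑ k, (∑ e, x k e ^ 2) ^ (p / 2)) * ((1/40) ^ (p / 2) * (G ^ p)⁻¹) ≤ 1 / 40 := by
    calc _ ≤ G ^ p * ((1/40) ^ (p / 2) * (G ^ p)⁻¹) := by
          apply mul_le_mul_of_nonneg_right h; positivity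
      _ = (1/40) ^ (p / 2) := by field_simp
      _ ≤ _ := h4
  have h6 : (0:ℝ) < 2 ^ Fintype.card ι := by positivity
  nlinarith [mul_le_mul_of_nonneg_left h5 h6.le]

end tail

lemma sq_bc_le {Z : Type*} [Fintype Z] (w w' : Z → ℝ) (h : ∀ z, 0 ≤ w z) (h' : ∀ z, 0 ≤ w' z)
    (hs : ∑ z, w z = 1) (hs' : ∑ z, w' z = 1) :
    (∑ z, Real.sqrt (w z * w' z)) ^ 2 ≤ 2 * ∑ z, min (w z) (w' z) := by
  have e : ∀ z, Real.sqrt (w z * w' z) = Real.sqrt (min (w z) (w' z)) * Real.sqrt (max (w z) (w' z)) := by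
    intro z
    rw [← Real.sqrt_mul (le_min (h z) (h' z)), min_mul_max]
  simp_rw [e]
  refine (Finset.sum_mul_sq_le_sq_mul_sq _ _ _).trans ?_
  have e1 : ∀ z, Real.sqrt (min (w z) (w' z)) ^ 2 = min (w z) (w' z) := fun z =>
    Real.sq_sqrt (le_min (h z) (h' z))
  have e2 : ∀ z, Real.sqrt (max (w z) (w' z)) ^ 2 = max (w z) (w' z) := fun z =>
    Real.sq_sqrt (le_max_of_le_left (h z))
  simp_rw [e1, e2]
  rw [mul_comm]
  apply mul_le_mul_of_nonneg_right
  · have : ∑ z, max (w z) (w' z) ≤ ∑ z, (w z + w' z) :=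
      Finset.sum_le_sum fun z _ => max_le_add_of_nonneg (h z) (h' z)
    rw [Finset.sum_add_distrib] at this
    linarith
  · exact Finset.sum_nonneg fun z _ => le_min (h z) (h' z)

lemma bc_pow {Z : Type*} [Fintype Z] (n : ℕ) (w w' : Z → ℝ) (h : ∀ z, 0 ≤ w z) (h' : ∀ z, 0 ≤ w' z) :
    ∑ z : Fin n → Z, Real.sqrt ((∏ i, w (z i)) * ∏ i, w' (z i))
      = (∑ z, Real.sqrt (w z * w' z)) ^ n := by
  rw [Fintype.sum_pow]
  refine Finset.sum_congr rfl fun z _ => ?_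
  rw [← Finset.prod_mul_distrib, Real.sqrt_prod]
  intro i _
  exact mul_nonneg (h _) (h' _)

/-- affinity of product weights -/
lemma min_prod_ge {Z : Type*} [Fintype Z] (n : ℕ) (w w' : Z → ℝ) (h : ∀ z, 0 ≤ w z)
    (h' : ∀ z, 0 ≤ w' z) (hs : ∑ z, w z = 1) (hs' : ∑ z, w' z = 1)
    (hh : n * ∑ z, (Real.sqrt (w z) - Real.sqrt (w' z)) ^ 2 ≤ 1 / 10) :
    (2 / 5 : ℝ) ≤ ∑ z : Fin n → Z, min (∏ i, w (z i)) (∏ i, w' (z i)) := by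
  have hW : ∑ z : Fin n → Z, ∏ i, w (z i) = 1 := by rw [← Fintype.sum_pow, hs, one_pow]
  have hW' : ∑ z : Fin n → Z, ∏ i, w' (z i) = 1 := by rw [← Fintype.sum_pow, hs', one_pow]
  have h1 := sq_bc_le (fun z : Fin n → Z => ∏ i, w (z i)) (fun z => ∏ i, w' (z i))
    (fun z => Finset.prod_nonneg fun i _ => h _) (fun z => Finset.prod_nonneg fun i _ => h' _) hW hW'
  rw [bc_pow n w w' h h'] at h1
  have e : ∑ z, (Real.sqrt (w z) - Real.sqrt (w' z)) ^ 2 = 2 - 2 * ∑ z, Real.sqrt (w z * w' z) := by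
    have : ∀ z, (Real.sqrt (w z) - Real.sqrt (w' z)) ^ 2 = w z + w' z - 2 * Real.sqrt (w z * w' z) := by
      intro z
      rw [Real.sqrt_mul (h z), sub_sq, Real.sq_sqrt (h z), Real.sq_sqrt (h' z)]; ring
    simp_rw [this, Finset.sum_sub_distrib, Finset.sum_add_distrib, ← Finset.mul_sum, hs, hs']
    ring
  set b := ∑ z, Real.sqrt (w z * w' z) with hb
  have hb0 : 0 ≤ b := Finset.sum_nonneg fun z _ => Real.sqrt_nonneg _
  have h2 := one_add_mul_le_pow (a := b - 1) (by linarith) n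
  rw [e] at hh
  have h3 : (19/20 : ℝ) ≤ b ^ n := by
    have : (1 + (b - 1)) = b := by ring
    rw [this] at h2
    nlinarith
  nlinarith

section assouad
variable {ι : Type*} [Fintype ι] [DecidableEq ι]

def flip1 (σ : ι → Bool) (e : ι) : ι → Bool := Function.update σ e (!(σ e))

lemma flip1_flip1 (σ : ι → Bool) (e : ι) : flip1 (flip1 σ e) e = σ := by
  ext x
  by_cases h : x = e
  · subst h; simp [flip1]
  · simp [flip1, h]

def flipEquiv (e : ι) : (ι → Bool) ≃ (ι → Bool) where
  toFun σ := flip1 σ e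
  invFun σ := flip1 σ e
  left_inv σ := flip1_flip1 σ e
  right_inv σ := flip1_flip1 σ e

lemma assouad_sum {Y : Type*} [Fintype Y] (W : (ι → Bool) → Y → ℝ) (hW : ∀ σ z, 0 ≤ W σ z)
    (hmin : ∀ σ e, (2 / 5 : ℝ) ≤ ∑ z, min (W σ z) (W (flip1 σ e) z))
    (τ : Y → ι → Bool) :
    (1 / 5 : ℝ) * Fintype.card ι * 2 ^ (Fintype.card ι)
      ≤ ∑ σ, ∑ z, W σ z * (hammingDist (τ z) σ : ℝ) := by
  have hham : ∀ σ z, (hammingDist (τ z) σ : ℝ) = ∑ e, if τ z e ≠ σ e then (1:ℝ) else 0 := by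
    intro σ z
    rw [Finset.sum_boole]; rfl
  have key : ∀ e, (1 / 5 : ℝ) * 2 ^ (Fintype.card ι) ≤
      ∑ σ, ∑ z, W σ z * (if τ z e ≠ σ e then (1:ℝ) else 0) := by
    intro e
    have e1 : ∑ σ, ∑ z, W σ z * (if τ z e ≠ σ e then (1:ℝ) else 0)
      = ∑ σ, ∑ z, W (flip1 σ e) z * (if τ z e ≠ (flip1 σ e) e then (1:ℝ) else 0) :=
      ((flipEquiv e).sum_comp (fun σ => ∑ z, W σ z * (if τ z e ≠ σ e then (1:ℝ) else 0))).symm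
    have e2 : ∑ σ : ι → Bool, (2 / 5 : ℝ) ≤ ∑ σ, ∑ z, W σ z * (if τ z e ≠ σ e then (1:ℝ) else 0)
       + ∑ σ, ∑ z, W (flip1 σ e) z * (if τ z e ≠ (flip1 σ e) e then (1:ℝ) else 0) := by
      rw [← Finset.sum_add_distrib]
      refine Finset.sum_le_sum fun σ _ => (hmin σ e).trans ?_
      rw [← Finset.sum_add_distrib]
      refine Finset.sum_le_sum fun z _ => ?_
      have hf : flip1 σ e e = !(σ e) := by simp [flip1]
      rw [hf]
      cases h1 : τ z e <;> cases h2 : σ e <;> simp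
    rw [← e1] at e2
    simp only [Finset.sum_const, Finset.card_univ, nsmul_eq_mul, Fintype.card_pi, Fintype.card_bool,
      Finset.prod_const] at e2
    push_cast at e2
    linarith
  calc (1 / 5 : ℝ) * Fintype.card ι * 2 ^ (Fintype.card ι) = ∑ e : ι, (1 / 5 : ℝ) * 2 ^ (Fintype.card ι) := by
        simp; ring
    _ ≤ ∑ e : ι, ∑ σ, ∑ z, W σ z * (if τ z e ≠ σ e then (1:ℝ) else 0) :=
        Finset.sum_le_sum fun e _ => key e
    _ = _ := by
        simp_rw [hham, Finset.mul_sum]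
        rw [Finset.sum_comm]
        refine Finset.sum_congr rfl fun σ _ => ?_
        rw [Finset.sum_comm]

lemma assouad_exists {Y : Type*} [Fintype Y] [Nonempty ι] (W : (ι → Bool) → Y → ℝ)
    (hW : ∀ σ z, 0 ≤ W σ z) (hW1 : ∀ σ, ∑ z, W σ z = 1)
    (hmin : ∀ σ e, (2 / 5 : ℝ) ≤ ∑ z, min (W σ z) (W (flip1 σ e) z))
    (τ : Y → ι → Bool) (bad : Finset (ι → Bool))
    (hbad : (bad.card : ℝ) ≤ 2 ^ (Fintype.card ι) / 20) :
    ∃ σ, σ ∉ bad ∧ (1 / 11 : ℝ) ≤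
      ∑ z ∈ Finset.univ.filter (fun z => (Fintype.card ι : ℝ) / 20 ≤ hammingDist (τ z) σ), W σ z := by
  classical
  set N := Fintype.card ι with hN
  have hNpos : (0:ℝ) < N := by exact_mod_cast Fintype.card_pos
  have h2N : (0:ℝ) < 2 ^ N := by positivity
  set f : (ι → Bool) → ℝ := fun σ =>
    ∑ z ∈ Finset.univ.filter (fun z => (N : ℝ) / 20 ≤ hammingDist (τ z) σ), W σ z with hf
  have hf0 : ∀ σ, 0 ≤ f σ := fun σ => Finset.sum_nonneg fun z _ => hW σ z
  have hf1 : ∀ σ, f σ ≤ 1 := fun σ => by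
    rw [← hW1 σ]
    exact Finset.sum_le_sum_of_subset_of_nonneg (Finset.filter_subset _ _) (fun z _ _ => hW σ z)
  by_contra hcon
  push Not at hcon
  have hA := assouad_sum W hW hmin τ
  have hB : ∀ σ, ∑ z, W σ z * (hammingDist (τ z) σ : ℝ) ≤ N * f σ + N / 20 := by
    intro σ
    have : (N * f σ + N / 20 : ℝ) = ∑ z, (W σ z * (N * (if (N : ℝ) / 20 ≤ hammingDist (τ z) σ then 1 else 0) + N / 20)) := by
      simp only [mul_add, Finset.sum_add_distrib, ← Finset.sum_mul, hW1, hf, Finset.sum_filter,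
        Finset.mul_sum, one_mul]
      congr 1
      refine Finset.sum_congr rfl fun z _ => ?_
      split_ifs <;> ring
    rw [this]
    refine Finset.sum_le_sum fun z _ => mul_le_mul_of_nonneg_left ?_ (hW σ z)
    have hle : (hammingDist (τ z) σ : ℝ) ≤ N := by exact_mod_cast hammingDist_le_card_fintype
    split_ifs with hc
    · linarith
    · push Not at hc; linarith
  have hC : ∑ σ, f σ ≤ bad.card + (1/11) * 2 ^ N := by
    rw [← Finset.sum_sdiff (Finset.subset_univ bad)]
    have a1 : ∑ σ ∈ bad, f σ ≤ bad.card := by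
      have := Finset.sum_le_card_nsmul bad f 1 (fun σ _ => hf1 σ)
      simpa using this
    have a2 : ∑ σ ∈ Finset.univ \ bad, f σ ≤ (1/11) * 2 ^ N := by
      have := Finset.sum_le_card_nsmul (Finset.univ \ bad) f (1/11) (fun σ hσ => by
        have := hcon σ (by simpa using hσ)
        exact this.le)
      refine this.trans ?_
      have hc : (Finset.univ \ bad).card ≤ 2 ^ N := by
        refine (Finset.card_le_univ _).trans ?_
        simp [hN]
      have hc' : ((Finset.univ \ bad).card : ℝ) ≤ 2 ^ N := by exact_mod_cast hc
      rw [nsmul_eq_mul]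
      linarith
    linarith
  have hD : ∑ σ, ∑ z, W σ z * (hammingDist (τ z) σ : ℝ) ≤ N * (∑ σ, f σ) + 2 ^ N * (N / 20) := by
    refine (Finset.sum_le_sum fun σ _ => hB σ).trans ?_
    rw [Finset.sum_add_distrib, ← Finset.mul_sum]
    simp [hN]
  -- sum f ≥ 3/20 * 2^N
  have hE : (3/20 : ℝ) * 2 ^ N ≤ ∑ σ, f σ := by
    have : (N:ℝ) * ((3/20 : ℝ) * 2 ^ N) ≤ N * ∑ σ, f σ := by linarith
    exact le_of_mul_le_mul_left this hNpos
  linarith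

end assouad

section meas
variable {m : ℕ}

def clip (x : ℝ) : ℝ := max (-(1/2)) (min (1/2) x)

lemma clip_bd (x : ℝ) : |clip x| ≤ 1/2 := by
  rw [abs_le]; unfold clip
  exact ⟨le_max_left _ _, max_le (by norm_num) (min_le_left _ _)⟩

lemma clip_eq {x : ℝ} (h : |x| ≤ 1/2) : clip x = x := by
  rw [abs_le] at h
  unfold clip
  rw [min_eq_right h.2, max_eq_right h.1]

lemma clip_lip (x y : ℝ) : (clip x - clip y) ^ 2 ≤ (x - y) ^ 2 := by
  rw [sq_le_sq]
  unfold clip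
  rw [max_comm, max_comm (-(1/2)) (min (1/2) y), min_comm, min_comm (1/2) y]
  exact (abs_max_sub_max_le_abs _ _ _).trans (abs_min_sub_min_le_max _ _ _ _ |>.trans (by simp))

def wt (S : Matrix (Fin m) (Fin m) ℝ) (a : ℝ) (z : Fin m × Fin m × Bool) : ℝ :=
  (1 + sgn z.2.2 * clip (S z.1 z.2.1 / a)) / (2 * (m:ℝ) ^ 2)

lemma wt_lower (hm : 1 ≤ m) (S : Matrix (Fin m) (Fin m) ℝ) (a : ℝ) (z) :
    1 / (4 * (m:ℝ) ^ 2) ≤ wt S a z := by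
  have hm' : (0:ℝ) < m := by exact_mod_cast hm
  unfold wt
  have h1 : |sgn z.2.2 * clip (S z.1 z.2.1 / a)| ≤ 1/2 := by
    rw [abs_mul, sgn_abs, one_mul]; exact clip_bd _
  rw [abs_le] at h1
  rw [div_le_div_iff₀ (by positivity) (by positivity)]
  nlinarith [sq_nonneg (m:ℝ), h1.1]

lemma wt_nonneg (hm : 1 ≤ m) (S : Matrix (Fin m) (Fin m) ℝ) (a : ℝ) (z) : 0 ≤ wt S a z :=
  le_trans (by positivity) (wt_lower hm S a z)

lemma wt_sum2 (S : Matrix (Fin m) (Fin m) ℝ) (a : ℝ) (u v) :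
    ∑ b : Bool, wt S a (u, v, b) = 1 / (m:ℝ) ^ 2 := by
  simp [wt, sgn]
  ring

lemma wt_sum (hm : 1 ≤ m) (S : Matrix (Fin m) (Fin m) ℝ) (a : ℝ) : ∑ z, wt S a z = 1 := by
  have hm' : (0:ℝ) < m := by exact_mod_cast hm
  rw [Fintype.sum_prod_type]
  simp_rw [Fintype.sum_prod_type, wt_sum2]
  simp
  field_simp

lemma wt_hell (hm : 1 ≤ m) (S S' : Matrix (Fin m) (Fin m) ℝ) {a : ℝ} (ha : 0 < a) :
    ∑ z, (Real.sqrt (wt S a z) - Real.sqrt (wt S' a z)) ^ 2 ≤ hsNormSq (S - S') / (a ^ 2 * (m:ℝ) ^ 2) := by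
  have hm' : (0:ℝ) < m := by exact_mod_cast hm
  have hpt : ∀ z, (Real.sqrt (wt S a z) - Real.sqrt (wt S' a z)) ^ 2
      ≤ ((S - S') z.1 z.2.1) ^ 2 / (2 * a ^ 2 * (m:ℝ) ^ 2) := by
    intro z
    have l1 := wt_lower hm S a z
    have l2 := wt_lower hm S' a z
    have n1 := wt_nonneg hm S a z
    have n2 := wt_nonneg hm S' a z
    have hd : (wt S a z - wt S' a z) ^ 2 ≤ ((S - S') z.1 z.2.1) ^ 2 / (4 * a ^ 2 * (m:ℝ) ^ 4) := by
      have e : wt S a z - wt S' a z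
        = sgn z.2.2 * (clip (S z.1 z.2.1 / a) - clip (S' z.1 z.2.1 / a)) / (2 * (m:ℝ) ^ 2) := by
        unfold wt; ring
      rw [e, div_pow, mul_pow, sgn_sq, one_mul]
      have c1 := clip_lip (S z.1 z.2.1 / a) (S' z.1 z.2.1 / a)
      calc _ ≤ (S z.1 z.2.1 / a - S' z.1 z.2.1 / a) ^ 2 / (2 * (m:ℝ) ^ 2) ^ 2 := by gcongr
        _ = _ := by rw [Matrix.sub_apply]; field_simp; norm_num
    set x := Real.sqrt (wt S a z)
    set y := Real.sqrt (wt S' a z)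
    have hx : x ^ 2 = wt S a z := Real.sq_sqrt n1
    have hy : y ^ 2 = wt S' a z := Real.sq_sqrt n2
    have hx0 : 0 ≤ x := Real.sqrt_nonneg _
    have hy0 : 0 ≤ y := Real.sqrt_nonneg _
    rw [← hx, ← hy] at hd
    rw [← hx] at l1
    rw [← hy] at l2
    have hq : 1 / (2 * (m:ℝ) ^ 2) ≤ (x + y) ^ 2 := by
      have : 1 / (2 * (m:ℝ) ^ 2) = 1 / (4 * (m:ℝ) ^ 2) + 1 / (4 * (m:ℝ) ^ 2) := by field_simp; norm_num
      nlinarith [mul_nonneg hx0 hy0]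
    have h3 : (x - y) ^ 2 * (1 / (2 * (m:ℝ) ^ 2)) ≤ ((S - S') z.1 z.2.1) ^ 2 / (4 * a ^ 2 * (m:ℝ) ^ 4) := by
      calc _ ≤ (x - y) ^ 2 * (x + y) ^ 2 := by gcongr
        _ = (x ^ 2 - y ^ 2) ^ 2 := by ring
        _ ≤ _ := hd
    have e4 : ((S - S') z.1 z.2.1) ^ 2 / (4 * a ^ 2 * (m:ℝ) ^ 4)
       = (((S - S') z.1 z.2.1) ^ 2 / (2 * a ^ 2 * (m:ℝ) ^ 2)) * (1 / (2 * (m:ℝ) ^ 2)) := by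
      field_simp; norm_num
    rw [e4] at h3
    exact le_of_mul_le_mul_right h3 (by positivity)
  refine (Finset.sum_le_sum fun z _ => hpt z).trans (le_of_eq ?_)
  rw [Fintype.sum_prod_type]
  simp_rw [Fintype.sum_prod_type]
  simp only [Finset.sum_const, Finset.card_univ, Fintype.card_bool, hsNormSq, Finset.sum_div]
  refine Finset.sum_congr rfl fun u _ => Finset.sum_congr rfl fun v _ => ?_
  rw [nsmul_eq_mul]
  push_cast
  field_simp

def baseM (S : Matrix (Fin m) (Fin m) ℝ) (a : ℝ) : Measure (Fin m × Fin m × Bool) :=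
  ∑ z, ENNReal.ofReal (wt S a z) • Measure.dirac z

lemma baseM_singleton (S : Matrix (Fin m) (Fin m) ℝ) (a : ℝ) (z) :
    baseM S a {z} = ENNReal.ofReal (wt S a z) := by
  unfold baseM
  rw [Measure.finsetSum_apply]
  simp only [Measure.smul_apply, smul_eq_mul, MeasurableSet.singleton, Measure.dirac_apply',
    Set.indicator_apply, Set.mem_singleton_iff, Pi.one_apply, mul_ite, mul_one, mul_zero]
  simp

lemma baseM_finset (hm : 1 ≤ m) (S : Matrix (Fin m) (Fin m) ℝ) (a : ℝ) (s : Finset (Fin m × Fin m × Bool)) :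
    baseM S a s = ENNReal.ofReal (∑ z ∈ s, wt S a z) := by
  rw [← sum_measure_singleton, ENNReal.ofReal_sum_of_nonneg (fun z _ => wt_nonneg hm S a z)]
  simp_rw [baseM_singleton]

lemma baseM_prob (hm : 1 ≤ m) (S : Matrix (Fin m) (Fin m) ℝ) (a : ℝ) : IsProbabilityMeasure (baseM S a) := by
  constructor
  have := baseM_finset hm S a Finset.univ
  rw [wt_sum hm] at this
  simpa using this

def obsMap (a : ℝ) (z : Fin m × Fin m × Bool) : Obs m := (z.1, z.2.1, a * sgn z.2.2)

lemma obsMap_meas (a : ℝ) : Measurable (obsMap (m := m) a) := measurable_of_countable _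

def PS (S : Matrix (Fin m) (Fin m) ℝ) (a : ℝ) : Measure (Obs m) := (baseM S a).map (obsMap a)

lemma PS_prob (hm : 1 ≤ m) (S : Matrix (Fin m) (Fin m) ℝ) (a : ℝ) : IsProbabilityMeasure (PS S a) := by
  have := baseM_prob hm S a
  exact Measure.isProbabilityMeasure_map (obsMap_meas a).aemeasurable

lemma PS_uniform (hm : 1 ≤ m) (S : Matrix (Fin m) (Fin m) ℝ) (a : ℝ) : UniformDesign m (PS S a) := by
  have hm' : (0:ℝ) < m := by exact_mod_cast hm
  intro u v
  have hms : MeasurableSet {z : Obs m | z.1 = u ∧ z.2.1 = v} := by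
    apply MeasurableSet.inter
    · exact measurable_fst (measurableSet_singleton u)
    · exact (measurable_fst.comp measurable_snd) (measurableSet_singleton v)
  unfold PS
  rw [Measure.map_apply (obsMap_meas a) hms]
  have : obsMap a ⁻¹' {z : Obs m | z.1 = u ∧ z.2.1 = v} =
      (({(u, v, false), (u, v, true)} : Finset (Fin m × Fin m × Bool)) : Set _) := by
    ext ⟨x, y, b⟩
    cases b <;> simp [obsMap]
  have e2 := wt_sum2 S a u v
  rw [Fintype.sum_bool] at e2
  rw [this, baseM_finset hm, Finset.sum_pair (by simp), add_comm, e2]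
  rw [one_div, ENNReal.ofReal_inv_of_pos (by positivity), ENNReal.ofReal_pow hm'.le, ENNReal.ofReal_natCast]

lemma PS_bdd (S : Matrix (Fin m) (Fin m) ℝ) {a : ℝ} (ha : 0 < a) : ∀ᵐ z ∂(PS S a), |z.2.2| ≤ a := by
  unfold PS
  rw [ae_map_iff (obsMap_meas a).aemeasurable]
  · refine Filter.Eventually.of_forall fun z => ?_
    simp [obsMap, abs_mul, sgn_abs, abs_of_pos ha]
  · exact measurableSet_le (by fun_prop) measurable_const

lemma PS_reg (hm : 1 ≤ m) (S : Matrix (Fin m) (Fin m) ℝ) {a : ℝ} (ha : 0 < a)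
    (hS : ∀ u v, |S u v| ≤ a / 2) : regKernel m (PS S a) = S := by
  have hm' : (0:ℝ) < m := by exact_mod_cast hm
  have := baseM_prob hm S a
  ext u v
  simp only [regKernel, Matrix.of_apply]
  unfold PS
  rw [integral_map (obsMap_meas a).aemeasurable]
  · rw [integral_fintype (Integrable.of_finite)]
    have hr : ∀ z, (baseM S a).real {z} = wt S a z := by
      intro z
      rw [measureReal_def, baseM_singleton, ENNReal.toReal_ofReal (wt_nonneg hm S a z)]
    simp_rw [hr]
    rw [Fintype.sum_prod_type]
    simp_rw [Fintype.sum_prod_type]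
    have e : ∀ x y, ∑ b : Bool, wt S a (x, y, b) • (if (obsMap a (x, y, b)).1 = u ∧ (obsMap a (x, y, b)).2.1 = v
        then (obsMap a (x, y, b)).2.2 else 0) = if x = u then if y = v then S u v / (m:ℝ) ^ 2 else 0 else 0 := by
      intro x y
      have hc : clip (S x y / a) = S x y / a := by
        apply clip_eq
        rw [abs_div, abs_of_pos ha, div_le_iff₀ ha]
        linarith [hS x y]
      by_cases h1 : x = u
      · by_cases h2 : y = v
        · subst h1 h2
          simp [obsMap, wt, sgn, hc]
          field_simp
          ring
        · simp [obsMap, h2]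
      · simp [obsMap, h1]
    simp_rw [e]
    simp
    field_simp
  · apply Measurable.aestronglyMeasurable
    apply Measurable.ite
    · apply MeasurableSet.inter
      · exact measurable_fst (measurableSet_singleton u)
      · exact (measurable_fst.comp measurable_snd) (measurableSet_singleton v)
    · fun_prop
    · fun_prop

lemma PS_pi_ge (hm : 1 ≤ m) (n : ℕ) (S : Matrix (Fin m) (Fin m) ℝ) (a : ℝ)
    (B : Set (Fin n → Obs m)) (s : Finset (Fin n → Fin m × Fin m × Bool))
    (h : ∀ z ∈ s, (fun i => obsMap a (z i)) ∈ B) :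
    ENNReal.ofReal (∑ z ∈ s, ∏ i, wt S a (z i)) ≤ (Measure.pi fun _ : Fin n => PS S a) B := by
  have := baseM_prob hm S a
  have hP := PS_prob hm S a
  unfold PS at hP ⊢
  rw [← Measure.pi_map_pi (f := fun _ : Fin n => obsMap a) (fun _ => (obsMap_meas a).aemeasurable)]
  refine le_trans ?_ (Measure.le_map_apply ?_ B)
  · calc _ = (Measure.pi fun _ : Fin n => baseM S a) (s : Set _) := by
          rw [← sum_measure_singleton,
            ENNReal.ofReal_sum_of_nonneg (fun z _ => Finset.prod_nonneg fun i _ => wt_nonneg hm S a _)]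
          refine Finset.sum_congr rfl fun z _ => ?_
          rw [Measure.pi_singleton, ENNReal.ofReal_prod_of_nonneg (fun i _ => wt_nonneg hm S a _)]
          simp_rw [baseM_singleton]
      _ ≤ _ := measure_mono fun z hz => h z hz
  · exact (measurable_of_countable _).aemeasurable

lemma hs_tri (A B : Matrix (Fin m) (Fin m) ℝ) : hsNormSq (A - B) ≤ 2 * hsNormSq A + 2 * hsNormSq B := by
  unfold hsNormSq
  simp only [Finset.mul_sum, ← Finset.sum_add_distrib]
  refine Finset.sum_le_sum fun u _ => Finset.sum_le_sum fun v _ => ?_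
  rw [Matrix.sub_apply]
  nlinarith [sq_nonneg (A u v + B u v)]

lemma hs_neg (A B : Matrix (Fin m) (Fin m) ℝ) : hsNormSq (A - B) = hsNormSq (B - A) := by
  unfold hsNormSq
  refine Finset.sum_congr rfl fun u _ => Finset.sum_congr rfl fun v _ => ?_
  rw [Matrix.sub_apply, Matrix.sub_apply]; ring

theorem main_assouad {ι : Type*} [Fintype ι] [DecidableEq ι] [Nonempty ι] (hm : 1 ≤ m) (n : ℕ)
    {a D : ℝ} (ha : 0 < a) (hD : 0 ≤ D) (S : (ι → Bool) → Matrix (Fin m) (Fin m) ℝ)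
    (h1 : ∀ σ e, n * hsNormSq (S σ - S (flip1 σ e)) ≤ 1 / 10 * (a ^ 2 * (m:ℝ) ^ 2))
    (h2 : ∀ σ σ', D * (hammingDist σ σ' : ℝ) ≤ hsNormSq (S σ - S σ'))
    (h3 : ((Finset.univ.filter fun σ => ∃ u v, a / 2 < |S σ u v|).card : ℝ) ≤ 2 ^ (Fintype.card ι) / 20)
    (Shat : (Fin n → Obs m) → Matrix (Fin m) (Fin m) ℝ) :
    ∃ σ, (∀ u v, |S σ u v| ≤ a / 2) ∧ ENNReal.ofReal (1 / 11) ≤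
      (Measure.pi fun _ : Fin n => PS (S σ) a) {ω | D * Fintype.card ι / 80 ≤ hsNormSq (Shat ω - S σ)} := by
  classical
  have hm' : (0:ℝ) < m := by exact_mod_cast hm
  have hex : ∀ z : Fin n → Fin m × Fin m × Bool, ∃ τ : ι → Bool, ∀ σ,
      hsNormSq (Shat (fun i => obsMap a (z i)) - S τ) ≤ hsNormSq (Shat (fun i => obsMap a (z i)) - S σ) :=
    fun z => Finite.exists_min _
  choose τ hτ using hex
  obtain ⟨σ, hσ, hp⟩ := assouad_exists (fun σ (z : Fin n → Fin m × Fin m × Bool) => ∏ i, wt (S σ) a (z i))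
    (fun σ z => Finset.prod_nonneg fun i _ => wt_nonneg hm _ a _)
    (fun σ => by rw [← Fintype.sum_pow, wt_sum hm, one_pow])
    (fun σ e => by
      refine min_prod_ge n _ _ (wt_nonneg hm _ a) (wt_nonneg hm _ a) (wt_sum hm _ a) (wt_sum hm _ a) ?_
      refine (mul_le_mul_of_nonneg_left (wt_hell hm _ _ ha) (Nat.cast_nonneg n)).trans ?_
      rw [← mul_div_assoc, div_le_iff₀ (by positivity)]
      exact h1 σ e) τ _ h3
  refine ⟨σ, ?_, ?_⟩
  · simpa using hσ
  · refine (ENNReal.ofReal_le_ofReal hp).trans (PS_pi_ge hm n _ a _ _ ?_)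
    intro z hz
    simp only [Finset.mem_filter, Finset.mem_univ, true_and] at hz
    simp only [Set.mem_ofPred_eq]
    set A := Shat (fun i => obsMap a (z i)) with hA
    have t1 := hs_tri (A - S σ) (A - S (τ z))
    have t2 := hτ z σ
    have t3 := h2 (τ z) σ
    have e : A - S σ - (A - S (τ z)) = S (τ z) - S σ := by abel
    rw [e] at t1
    have := mul_le_mul_of_nonneg_left hz hD
    linarith

end meas

section alg
variable {m : ℕ}

def ON {K : Type*} [DecidableEq K] (f : K → Fin m → ℝ) : Prop :=
  ∀ i j, (∑ v, f i v * f j v) = if i = j then (1 : ℝ) else 0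

lemma parseval {K : Type*} [Fintype K] [DecidableEq K] {f : K → Fin m → ℝ} (hf : ON f) (c : K → ℝ) :
    ∑ u, (∑ i, c i * f i u) ^ 2 = ∑ i, c i ^ 2 := by
  have : ∀ u, (∑ i, c i * f i u) ^ 2 = ∑ i, ∑ j, c i * c j * (f i u * f j u) := by
    intro u
    rw [sq, Finset.sum_mul_sum]
    refine Finset.sum_congr rfl fun i _ => Finset.sum_congr rfl fun j _ => ?_
    ring
  simp_rw [this]
  rw [Finset.sum_comm]
  refine Finset.sum_congr rfl fun i _ => ?_
  rw [Finset.sum_comm]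
  simp_rw [← Finset.mul_sum, hf i]
  simp [sq]

def SC {K : Type*} [Fintype K] (f : K → Fin m → ℝ) (C : K → K → ℝ) : Matrix (Fin m) (Fin m) ℝ :=
  Matrix.of fun u v => ∑ j, (∑ i, C i j * f i u) * f j v

lemma hs_SC {K : Type*} [Fintype K] [DecidableEq K] {f : K → Fin m → ℝ} (hf : ON f) (C : K → K → ℝ) :
    hsNormSq (SC f C) = ∑ i, ∑ j, C i j ^ 2 := by
  unfold hsNormSq SC
  simp only [Matrix.of_apply]
  simp_rw [parseval hf]
  rw [Finset.sum_comm]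
  simp_rw [parseval hf]
  rw [Finset.sum_comm]

lemma SC_sub {K : Type*} [Fintype K] (f : K → Fin m → ℝ) (C C' : K → K → ℝ) :
    SC f C - SC f C' = SC f (fun i j => C i j - C' i j) := by
  ext u v
  simp [SC, sub_mul, Finset.sum_sub_distrib]

lemma SC_symm {K : Type*} [Fintype K] (f : K → Fin m → ℝ) (C : K → K → ℝ) (h : ∀ i j, C i j = C j i) :
    (SC f C).IsSymm := by
  ext u v
  simp only [SC, Matrix.transpose_apply, Matrix.of_apply, Finset.sum_mul]
  rw [Finset.sum_comm]
  refine Finset.sum_congr rfl fun i _ => Finset.sum_congr rfl fun j _ => ?_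
  rw [h]; ring

lemma bessel {φ : ℕ → Fin m → ℝ} (h : OrthonormalFamily m φ) (x : Fin m → ℝ) :
    ∑ k ∈ Finset.Icc 1 m, (∑ v, x v * φ k v) ^ 2 ≤ ∑ v, x v ^ 2 := by
  set c : ℕ → ℝ := fun k => ∑ v, x v * φ k v with hc
  have h0 : 0 ≤ ∑ v, (x v - ∑ k ∈ Finset.Icc 1 m, c k * φ k v) ^ 2 := Finset.sum_nonneg fun _ _ => sq_nonneg _
  have e1 : ∑ v, x v * ∑ k ∈ Finset.Icc 1 m, c k * φ k v = ∑ k ∈ Finset.Icc 1 m, c k ^ 2 := by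
    simp_rw [Finset.mul_sum]
    rw [Finset.sum_comm]
    refine Finset.sum_congr rfl fun k _ => ?_
    rw [sq]
    nth_rw 3 [hc]
    simp only
    rw [Finset.mul_sum]
    refine Finset.sum_congr rfl fun v _ => ?_
    ring
  have e2 : ∑ v, (∑ k ∈ Finset.Icc 1 m, c k * φ k v) ^ 2 = ∑ k ∈ Finset.Icc 1 m, c k ^ 2 := by
    have : ∀ v, (∑ k ∈ Finset.Icc 1 m, c k * φ k v) ^ 2
        = ∑ k ∈ Finset.Icc 1 m, ∑ j ∈ Finset.Icc 1 m, c k * c j * (φ k v * φ j v) := by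
      intro v
      rw [sq, Finset.sum_mul_sum]
      refine Finset.sum_congr rfl fun i _ => Finset.sum_congr rfl fun j _ => ?_
      ring
    simp_rw [this]
    rw [Finset.sum_comm]
    refine Finset.sum_congr rfl fun k hk => ?_
    rw [Finset.sum_comm]
    simp_rw [← Finset.mul_sum]
    rw [Finset.sum_congr rfl fun j hj => by rw [h k hk j hj]]
    simp [sq]
    intro hk1
    simp only [Finset.mem_Icc] at hk
    exact absurd (hk1 hk.1) (by omega)
  have e3 : ∑ v, (x v - ∑ k ∈ Finset.Icc 1 m, c k * φ k v) ^ 2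
     = ∑ v, x v ^ 2 - 2 * (∑ v, x v * ∑ k ∈ Finset.Icc 1 m, c k * φ k v)
       + ∑ v, (∑ k ∈ Finset.Icc 1 m, c k * φ k v) ^ 2 := by
    rw [Finset.mul_sum, ← Finset.sum_sub_distrib, ← Finset.sum_add_distrib]
    refine Finset.sum_congr rfl fun v _ => ?_
    ring
  rw [e3, e1, e2] at h0
  linarith

lemma sobolev_le {φ : ℕ → Fin m → ℝ} (h : OrthonormalFamily m φ) {lam : ℕ → ℝ} {l : ℕ}
    (hl : 1 ≤ l) (hlm : l ≤ m)
    (hnn : ∀ k ∈ Finset.Icc 1 m, 0 ≤ lam k)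
    (hmono : ∀ k l : ℕ, 1 ≤ k → k ≤ l → l ≤ m → lam k ≤ lam l)
    (S : Matrix (Fin m) (Fin m) ℝ) (hS : ∀ k, l < k → k ≤ m → S.mulVec (φ k) = 0) :
    sobolevHSSq lam φ S ≤ lam l * hsNormSq S := by
  unfold sobolevHSSq
  have h1 : ∀ k ∈ Finset.Icc 1 m, lam k * ∑ u, (S.mulVec (φ k) u) ^ 2 ≤ lam l * ∑ u, (S.mulVec (φ k) u) ^ 2 := by
    intro k hk
    simp only [Finset.mem_Icc] at hk
    rcases le_or_gt k l with hkl | hkl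
    · exact mul_le_mul_of_nonneg_right (hmono k l hk.1 hkl hlm) (Finset.sum_nonneg fun _ _ => sq_nonneg _)
    · rw [hS k hkl hk.2]; simp
  refine (Finset.sum_le_sum h1).trans ?_
  rw [← Finset.mul_sum]
  apply mul_le_mul_of_nonneg_left _ (hnn l (by simp; omega))
  rw [Finset.sum_comm]
  unfold hsNormSq
  refine Finset.sum_le_sum fun u _ => ?_
  exact bessel h (fun v => S u v)

lemma SC_mulVec {K : Type*} [Fintype K] (f : K → Fin m → ℝ) (C : K → K → ℝ) (g : Fin m → ℝ)
    (h : ∀ j, ∑ v, f j v * g v = 0) : (SC f C).mulVec g = 0 := by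
  ext u
  simp only [SC, Matrix.mulVec, dotProduct, Matrix.of_apply, Pi.zero_apply, Finset.sum_mul]
  rw [Finset.sum_comm]
  refine Finset.sum_eq_zero fun j _ => ?_
  rw [Finset.sum_comm]
  refine Finset.sum_eq_zero fun i _ => ?_
  have : ∀ v, C i j * f i u * f j v * g v = C i j * f i u * (f j v * g v) := fun v => by ring
  simp_rw [this, ← Finset.mul_sum, h, mul_zero]

lemma mom_le {K : Type*} [Fintype K] [Nonempty K] (f : K → Fin m → ℝ) {p F : ℝ} (hp : 2 ≤ p)
    (hF : 0 < F) (h : ∀ i, ∑ u, |f i u| ^ p ≤ F ^ p) :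
    ∑ u, (∑ i, f i u ^ 2) ^ (p / 2) ≤ (Real.sqrt (Fintype.card K) * F) ^ p := by
  have hN : (0:ℝ) < Fintype.card K := by exact_mod_cast Fintype.card_pos
  have h1 : ∀ u, (∑ i, f i u ^ 2) ^ (p / 2) ≤ (Fintype.card K : ℝ) ^ (p / 2 - 1) * ∑ i, |f i u| ^ p := by
    intro u
    have := Real.rpow_sum_le_const_mul_sum_rpow (Finset.univ : Finset K) (fun i => f i u ^ 2)
      (show (1:ℝ) ≤ p / 2 by linarith)
    have e : ∀ i, |f i u ^ 2| ^ (p / 2) = |f i u| ^ p := by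
      intro i
      rw [abs_pow, ← Real.rpow_natCast, ← Real.rpow_mul (abs_nonneg _)]
      congr 1; push_cast; ring
    simp only [e] at this
    simp only [abs_of_nonneg (sq_nonneg (f _ u))] at this
    simpa using this
  refine (Finset.sum_le_sum fun u _ => h1 u).trans ?_
  rw [← Finset.mul_sum, Finset.sum_comm]
  have h2 : ∑ i : K, ∑ u, |f i u| ^ p ≤ Fintype.card K * F ^ p := by
    refine (Finset.sum_le_sum fun i _ => h i).trans ?_
    simp
  calc _ ≤ (Fintype.card K : ℝ) ^ (p / 2 - 1) * (Fintype.card K * F ^ p) := by gcongr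
    _ = _ := by
      rw [Real.mul_rpow (Real.sqrt_nonneg _) hF.le, Real.sqrt_eq_rpow, ← Real.rpow_mul hN.le,
        ← mul_assoc]
      congr 1
      nth_rw 2 [← Real.rpow_one (Fintype.card K : ℝ)]
      rw [← Real.rpow_add hN]
      congr 1; ring

lemma ptw_le (f : Fin m → ℝ) {p F : ℝ} (hp : 2 ≤ p) (hF : 0 < F) (h : ∑ u, |f u| ^ p ≤ F ^ p) (u) :
    |f u| ≤ F := by
  have : |f u| ^ p ≤ F ^ p :=
    (Finset.single_le_sum (f := fun u => |f u| ^ p) (fun u _ => by positivity) (Finset.mem_univ u)).trans h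
  exact (Real.rpow_le_rpow_iff (abs_nonneg _) hF.le (by linarith)).1 this

end alg

section schemes
variable {m : ℕ}

lemma sgn_diff (b b' : Bool) : (sgn b - sgn b') ^ 2 = 4 * (if b ≠ b' then (1:ℝ) else 0) := by
  cases b <;> cases b' <;> norm_num [sgn]

lemma hamming_cast {ι : Type*} [Fintype ι] (σ σ' : ι → Bool) :
    (hammingDist σ σ' : ℝ) = ∑ e, if σ e ≠ σ' e then (1:ℝ) else 0 := by
  rw [Finset.sum_boole]; rfl

lemma hamming_flip {ι : Type*} [Fintype ι] [DecidableEq ι] (σ : ι → Bool) (e : ι) :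
    (hammingDist σ (flip1 σ e) : ℝ) = 1 := by
  rw [hamming_cast, Finset.sum_eq_single e]
  · simp [flip1]
  · intro b _ hb; simp [flip1, hb]
  · simp

/-! rank one scheme -/

def xv {K : Type*} [Fintype K] [DecidableEq K] (o : K) (σ : K → Bool) (i : K) : ℝ :=
  sgn (σ i) + if i = o then 2 * Real.sqrt (Fintype.card K) else 0

lemma sqrtN {K : Type*} [Fintype K] [Nonempty K] :
    1 ≤ Real.sqrt (Fintype.card K) ∧ Real.sqrt (Fintype.card K) ^ 2 = Fintype.card K := by
  have hN : (1:ℝ) ≤ Fintype.card K := by exact_mod_cast Fintype.card_pos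
  exact ⟨Real.one_le_sqrt.2 hN, Real.sq_sqrt (by linarith)⟩

lemma xv_norm {K : Type*} [Fintype K] [DecidableEq K] (o : K) (σ : K → Bool) :
    ∑ i, xv o σ i ^ 2 ≤ 9 * Fintype.card K := by
  have : Nonempty K := ⟨o⟩
  obtain ⟨h1, h2⟩ := sqrtN (K := K)
  have e : ∀ i, xv o σ i ^ 2 = 1 + if i = o then
      (4 * sgn (σ o) * Real.sqrt (Fintype.card K) + 4 * Real.sqrt (Fintype.card K) ^ 2) else 0 := by
    intro i
    unfold xv
    split_ifs with h
    · subst h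
      linear_combination sgn_sq (σ i)
    · simp [sgn_sq]
  simp_rw [e, Finset.sum_add_distrib]
  simp only [Finset.sum_ite_eq', Finset.mem_univ, if_true, Finset.sum_const, Finset.card_univ,
    nsmul_eq_mul, mul_one]
  have := (abs_le.1 (sgn_abs (σ o)).le).2
  nlinarith

def S1 {K : Type*} [Fintype K] [DecidableEq K] (f : K → Fin m → ℝ) (o : K) (κ : ℝ) (σ : K → Bool) :
    Matrix (Fin m) (Fin m) ℝ := SC f (fun i j => κ * (xv o σ i * xv o σ j))

lemma S1_apply {K : Type*} [Fintype K] [DecidableEq K] (f : K → Fin m → ℝ) (o : K) (κ : ℝ) (σ : K → Bool) (u v) :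
    S1 f o κ σ u v = κ * ((∑ i, xv o σ i * f i u) * (∑ i, xv o σ i * f i v)) := by
  simp only [S1, SC, Matrix.of_apply]
  rw [Finset.mul_sum, Finset.mul_sum]
  refine Finset.sum_congr rfl fun j _ => ?_
  rw [Finset.sum_mul, Finset.sum_mul, Finset.mul_sum]
  refine Finset.sum_congr rfl fun i _ => ?_
  ring

lemma S1_hs {K : Type*} [Fintype K] [DecidableEq K] {f : K → Fin m → ℝ} (hf : ON f) (o : K) (κ : ℝ) (σ : K → Bool) :
    hsNormSq (S1 f o κ σ) ≤ 81 * κ ^ 2 * (Fintype.card K : ℝ) ^ 2 := by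
  unfold S1
  rw [hs_SC hf]
  have e : ∑ i, ∑ j, (κ * (xv o σ i * xv o σ j)) ^ 2 = κ ^ 2 * (∑ i, xv o σ i ^ 2) ^ 2 := by
    rw [sq (∑ i, xv o σ i ^ 2), Finset.sum_mul_sum, Finset.mul_sum]
    refine Finset.sum_congr rfl fun i _ => ?_
    rw [Finset.mul_sum]
    refine Finset.sum_congr rfl fun j _ => ?_
    ring
  rw [e]
  have h0 : 0 ≤ ∑ i, xv o σ i ^ 2 := Finset.sum_nonneg fun _ _ => sq_nonneg _
  have : (∑ i, xv o σ i ^ 2) ^ 2 ≤ (9 * (Fintype.card K : ℝ)) ^ 2 := pow_le_pow_left₀ h0 (xv_norm o σ) 2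
  nlinarith [mul_le_mul_of_nonneg_left this (sq_nonneg κ)]

lemma S1_rank {K : Type*} [Fintype K] [DecidableEq K] (f : K → Fin m → ℝ) (o : K) (κ : ℝ) (σ : K → Bool) :
    (S1 f o κ σ).rank ≤ 1 := by
  have : S1 f o κ σ = Matrix.vecMulVec (fun u => κ * ∑ i, xv o σ i * f i u) (fun v => ∑ i, xv o σ i * f i v) := by
    ext u v
    rw [S1_apply, Matrix.vecMulVec_apply]; ring
  rw [this]
  exact Matrix.rank_vecMulVec_le _ _

lemma S1_flip {K : Type*} [Fintype K] [DecidableEq K] {f : K → Fin m → ℝ} (hf : ON f) (o : K) (κ : ℝ)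
    (σ : K → Bool) (e : K) :
    hsNormSq (S1 f o κ σ - S1 f o κ (flip1 σ e)) ≤ 144 * κ ^ 2 * (Fintype.card K : ℝ) := by
  unfold S1
  rw [SC_sub, hs_SC hf]
  set x := xv o σ with hx
  set y := xv o (flip1 σ e) with hy
  have hd : ∑ i, (x i - y i) ^ 2 = 4 := by
    have : ∀ i, (x i - y i) ^ 2 = 4 * (if σ i ≠ flip1 σ e i then (1:ℝ) else 0) := by
      intro i
      rw [← sgn_diff]
      simp [hx, hy, xv]
    simp_rw [this, ← Finset.mul_sum, ← hamming_cast, hamming_flip]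
    norm_num
  have hpt : ∀ i j, (κ * (x i * x j) - κ * (y i * y j)) ^ 2
      ≤ 2 * κ ^ 2 * (x i ^ 2 * (x j - y j) ^ 2) + 2 * κ ^ 2 * ((x i - y i) ^ 2 * y j ^ 2) := by
    intro i j
    have : κ * (x i * x j) - κ * (y i * y j) = κ * (x i * (x j - y j)) + κ * ((x i - y i) * y j) := by ring
    rw [this]
    nlinarith [sq_nonneg (κ * (x i * (x j - y j)) - κ * ((x i - y i) * y j))]
  refine (Finset.sum_le_sum fun i _ => Finset.sum_le_sum fun j _ => hpt i j).trans ?_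
  simp_rw [Finset.sum_add_distrib, ← Finset.mul_sum]
  rw [← Finset.sum_mul, ← Finset.sum_mul, hd]
  have hx9 : ∑ i, x i ^ 2 ≤ 9 * Fintype.card K := xv_norm o σ
  have hy9 : ∑ i, y i ^ 2 ≤ 9 * Fintype.card K := xv_norm o _
  nlinarith [mul_le_mul_of_nonneg_left hx9 (sq_nonneg κ), mul_le_mul_of_nonneg_left hy9 (sq_nonneg κ)]

lemma S1_sep {K : Type*} [Fintype K] [DecidableEq K] {f : K → Fin m → ℝ} (hf : ON f) (o : K) (κ : ℝ)
    (σ σ' : K → Bool) :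
    (4 * κ ^ 2 * Fintype.card K) * (hammingDist σ σ' : ℝ) ≤ hsNormSq (S1 f o κ σ - S1 f o κ σ') := by
  have : Nonempty K := ⟨o⟩
  obtain ⟨h1, h2⟩ := sqrtN (K := K)
  unfold S1
  rw [SC_sub, hs_SC hf]
  refine le_trans ?_ (Finset.single_le_sum (f := fun i => ∑ j, (κ * (xv o σ i * xv o σ j) - κ * (xv o σ' i * xv o σ' j)) ^ 2)
    (fun i _ => Finset.sum_nonneg fun _ _ => sq_nonneg _) (Finset.mem_univ o))
  rw [hamming_cast, Finset.mul_sum]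
  refine Finset.sum_le_sum fun j _ => ?_
  rw [← h2]
  set q := Real.sqrt (Fintype.card K)
  split_ifs with hne
  · suffices h : 4 * q ^ 2 ≤ (xv o σ o * xv o σ j - xv o σ' o * xv o σ' j) ^ 2 by
      calc _ = κ ^ 2 * (4 * q ^ 2) := by ring
        _ ≤ κ ^ 2 * (xv o σ o * xv o σ j - xv o σ' o * xv o σ' j) ^ 2 := by gcongr
        _ = _ := by ring
    by_cases hj : j = o
    · subst hj
      simp only [xv, if_true]
      change 4 * q ^ 2 ≤ ((sgn (σ j) + 2 * q) * (sgn (σ j) + 2 * q) - (sgn (σ' j) + 2 * q) * (sgn (σ' j) + 2 * q)) ^ 2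
      cases hs : σ j <;> cases hs' : σ' j <;> simp_all [sgn] <;> nlinarith
    · simp only [xv, if_true, hj, if_false]
      change 4 * q ^ 2 ≤ ((sgn (σ o) + 2 * q) * (sgn (σ j) + 0) - (sgn (σ' o) + 2 * q) * (sgn (σ' j) + 0)) ^ 2
      have a1 := (abs_le.1 (sgn_abs (σ o)).le).1
      have a2 := (abs_le.1 (sgn_abs (σ' o)).le).1
      have : ((sgn (σ o) + 2 * q) * (sgn (σ j) + 0) - (sgn (σ' o) + 2 * q) * (sgn (σ' j) + 0)) ^ 2
        = (sgn (σ o) + 2 * q + (sgn (σ' o) + 2 * q)) ^ 2 := by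
        cases hs : σ j <;> cases hs' : σ' j
        · simp_all
        · simp [sgn]; ring
        · simp [sgn]; ring
        · simp_all
      rw [this]
      have : 2 * q ≤ sgn (σ o) + 2 * q + (sgn (σ' o) + 2 * q) := by linarith
      nlinarith
  · simp; positivity

lemma S1_bad {K : Type*} [Fintype K] [DecidableEq K] {f : K → Fin m → ℝ} (o : K) {κ p F a : ℝ}
    (hκ : 0 ≤ κ) (hp : 2 ≤ p) (hF : 0 < F) (ha : 0 < a) (h : ∀ i, ∑ u, |f i u| ^ p ≤ F ^ p)
    (hB : 576 * κ ^ 2 * p * (Fintype.card K : ℝ) ^ 3 * F ^ 4 ≤ a ^ 2 / 4) :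
    ((Finset.univ.filter fun σ => ∃ u v, a / 2 < |S1 f o κ σ u v|).card : ℝ) ≤ 2 ^ (Fintype.card K) / 20 := by
  classical
  have : Nonempty K := ⟨o⟩
  obtain ⟨h1, h2⟩ := sqrtN (K := K)
  have hN1 : (1:ℝ) ≤ Fintype.card K := by exact_mod_cast Fintype.card_pos
  set q := Real.sqrt (Fintype.card K) with hq
  set N : ℝ := (Fintype.card K : ℝ) with hN
  have hy : ∀ σ u, ∑ i, xv o σ i * f i u = ∑ i, sgn (σ i) * f i u + 2 * q * f o u := by
    intro σ u
    simp [xv, add_mul, Finset.sum_add_distrib, hq, hN]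
  have hfF : ∀ i u, |f i u| ≤ F := fun i u => ptw_le (f i) hp hF (h i) u
  by_cases hcase : κ * (3 * N * F) ^ 2 ≤ a / 2
  · have : (Finset.univ.filter fun σ => ∃ u v, a / 2 < |S1 f o κ σ u v|) = ∅ := by
      apply Finset.filter_false_of_mem
      intro σ _
      push Not
      intro u v
      have hb : ∀ u, |∑ i, xv o σ i * f i u| ≤ 3 * N * F := by
        intro u
        rw [hy]
        have b1 : |∑ i, sgn (σ i) * f i u| ≤ N * F := by
          refine (Finset.abs_sum_le_sum_abs _ _).trans ?_
          refine (Finset.sum_le_sum (g := fun _ => F) fun i _ => ?_).trans (by simp [hN])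
          rw [abs_mul, sgn_abs, one_mul]; exact hfF i u
        have b2 : |2 * q * f o u| ≤ 2 * N * F := by
          rw [abs_mul, abs_of_nonneg (by positivity)]
          have : q ≤ N := by nlinarith
          have := hfF o u
          gcongr
        refine (abs_add_le _ _).trans ?_
        linarith
      rw [S1_apply, abs_mul, abs_mul, abs_of_nonneg hκ]
      refine le_trans ?_ hcase
      rw [sq]
      gcongr
      · exact hb u
      · exact hb v
    rw [this]
    simp; positivity
  · push Not at hcase
    have hp0 : 0 < p := by linarith
    have hG : 0 < q * F := by positivity
    have ht0 : 0 < Real.sqrt (40 * p) * (q * F) := by positivity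
    have ht2 : (Real.sqrt (40 * p) * (q * F)) ^ 2 = 40 * p * (q * F) ^ 2 := by
      rw [mul_pow, Real.sq_sqrt (by positivity)]
    have hmom := mom_le f hp hF h
    have htail := tail_all (fun u i => f i u) hp hG ht0 ht2 hmom
    refine le_trans ?_ htail
    have hle : 64 * κ * p * N * F ^ 2 ≤ a / 2 := by
      by_contra hc
      push Not at hc
      have : (a / 2) * (a / 2) < (κ * (3 * N * F) ^ 2) * (64 * κ * p * N * F ^ 2) :=
        mul_lt_mul'' hcase hc (by positivity) (by positivity)
      nlinarith
    rw [Nat.cast_le]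
    apply Finset.card_le_card
    intro σ hσ
    simp only [Finset.mem_filter, Finset.mem_univ, true_and] at hσ ⊢
    by_contra hno
    push Not at hno
    obtain ⟨u, v, huv⟩ := hσ
    have hb : ∀ u, |∑ i, xv o σ i * f i u| ≤ 8 * (Real.sqrt p * (q * F)) := by
      intro u
      rw [hy]
      have b1 := hno u
      have b2 : |2 * q * f o u| ≤ 2 * q * F := by
        rw [abs_mul, abs_of_nonneg (by positivity)]
        have := hfF o u
        gcongr
      have b3 : Real.sqrt (40 * p) = Real.sqrt 40 * Real.sqrt p := Real.sqrt_mul (by norm_num) _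
      have b4 : Real.sqrt 40 ≤ 6.4 := by
        rw [Real.sqrt_le_left (by norm_num)]; norm_num
      have b5 : 2 ≤ 1.6 * Real.sqrt p := by
        have : 1.25 ≤ Real.sqrt p := by
          rw [Real.le_sqrt (by norm_num) (by linarith)]; linarith
        linarith
      refine (abs_add_le _ _).trans ?_
      rw [b3] at b1
      have c1 : Real.sqrt 40 * Real.sqrt p * (q * F) ≤ 6.4 * Real.sqrt p * (q * F) := by gcongr
      have c2 : 2 * (q * F) ≤ 1.6 * Real.sqrt p * (q * F) := by gcongr
      linarith
    rw [S1_apply, abs_mul, abs_mul, abs_of_nonneg hκ] at huv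
    have : κ * (|∑ i, xv o σ i * f i u| * |∑ i, xv o σ i * f i v|)
       ≤ κ * ((8 * (Real.sqrt p * (q * F))) * (8 * (Real.sqrt p * (q * F)))) := by
      gcongr
      · exact hb u
      · exact hb v
    have e : κ * ((8 * (Real.sqrt p * (q * F))) * (8 * (Real.sqrt p * (q * F)))) = 64 * κ * p * N * F ^ 2 := by
      have := Real.sq_sqrt hp0.le
      rw [← h2]
      linear_combination (64 * κ * q ^ 2 * F ^ 2) * this
    linarith

/-! linear scheme -/

def C2 {I J : Type*} (κ : ℝ) (σ : I × J → Bool) : I ⊕ J → I ⊕ J → ℝ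
  | Sum.inl i, Sum.inr j => κ * sgn (σ (i, j))
  | Sum.inr j, Sum.inl i => κ * sgn (σ (i, j))
  | _, _ => 0

lemma C2_symm {I J : Type*} (κ : ℝ) (σ : I × J → Bool) (x y) : C2 κ σ x y = C2 κ σ y x := by
  cases x <;> cases y <;> rfl

def S2 {I J : Type*} [Fintype I] [Fintype J] (f : I ⊕ J → Fin m → ℝ) (κ : ℝ) (σ : I × J → Bool) :
    Matrix (Fin m) (Fin m) ℝ := SC f (C2 κ σ)

lemma S2_hs {I J : Type*} [Fintype I] [Fintype J] [DecidableEq I] [DecidableEq J]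
    {f : I ⊕ J → Fin m → ℝ} (hf : ON f) (κ : ℝ) (σ : I × J → Bool) :
    hsNormSq (S2 f κ σ) = 2 * κ ^ 2 * (Fintype.card I * Fintype.card J) := by
  unfold S2
  rw [hs_SC hf]
  simp [Fintype.sum_sum_type, C2, mul_pow, sgn_sq]
  ring

lemma S2_sep {I J : Type*} [Fintype I] [Fintype J] [DecidableEq I] [DecidableEq J]
    {f : I ⊕ J → Fin m → ℝ} (hf : ON f) (κ : ℝ) (σ σ' : I × J → Bool) :
    hsNormSq (S2 f κ σ - S2 f κ σ') = 8 * κ ^ 2 * hammingDist σ σ' := by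
  unfold S2
  rw [SC_sub, hs_SC hf, hamming_cast, Fintype.sum_prod_type]
  simp only [Fintype.sum_sum_type, C2, ← mul_sub, mul_pow, sgn_diff, sub_self]
  simp only [ne_eq, OfNat.ofNat_ne_zero, not_false_eq_true, zero_pow, Finset.sum_const_zero, zero_add, add_zero, mul_zero]
  rw [Finset.sum_comm (s := (Finset.univ : Finset J))]
  simp only [← Finset.mul_sum]
  ring

lemma S2_apply {I J : Type*} [Fintype I] [Fintype J]
    (f : I ⊕ J → Fin m → ℝ) (κ : ℝ) (σ : I × J → Bool) (u v) :
    S2 f κ σ u v = κ * (∑ e : I × J, sgn (σ e) * (f (Sum.inl e.1) u * f (Sum.inr e.2) v))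
      + κ * (∑ e : I × J, sgn (σ e) * (f (Sum.inl e.1) v * f (Sum.inr e.2) u)) := by
  simp only [S2, SC, Matrix.of_apply, Fintype.sum_sum_type, C2, Fintype.sum_prod_type]
  simp only [zero_mul, Finset.sum_const_zero, zero_add, add_zero, Finset.mul_sum, Finset.sum_mul]
  rw [add_comm]
  congr 1
  · rw [Finset.sum_comm]
    refine Finset.sum_congr rfl fun j _ => Finset.sum_congr rfl fun i _ => ?_
    ring
  · refine Finset.sum_congr rfl fun j _ => Finset.sum_congr rfl fun i _ => ?_
    ring

lemma S2_rank {I J : Type*} [Fintype I] [Fintype J]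
    (f : I ⊕ J → Fin m → ℝ) (κ : ℝ) (σ : I × J → Bool) :
    (S2 f κ σ).rank ≤ 2 * Fintype.card I := by
  set h : I → Fin m → ℝ := fun i u => ∑ j, κ * sgn (σ (i, j)) * f (Sum.inr j) u with hh
  have : S2 f κ σ = (Matrix.of fun (u : Fin m) (k : I ⊕ I) => Sum.elim (fun i => f (Sum.inl i) u) (fun i => h i u) k)
     * (Matrix.of fun (k : I ⊕ I) (v : Fin m) => Sum.elim (fun i => h i v) (fun i => f (Sum.inl i) v) k) := by
    ext u v
    rw [S2_apply, Matrix.mul_apply, Fintype.sum_sum_type]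
    simp only [Matrix.of_apply, Sum.elim_inl, Sum.elim_inr, hh, Fintype.sum_prod_type, Finset.mul_sum, Finset.sum_mul]
    congr 1
    · refine Finset.sum_congr rfl fun j _ => Finset.sum_congr rfl fun i _ => ?_
      ring
    · refine Finset.sum_congr rfl fun j _ => Finset.sum_congr rfl fun i _ => ?_
      ring
  rw [this]
  refine (Matrix.rank_mul_le_left _ _).trans ((Matrix.rank_le_card_width _).trans ?_)
  simp; omega

lemma S2_bad {I J : Type*} [Fintype I] [Fintype J] [DecidableEq I] [DecidableEq J] [Nonempty I] [Nonempty J]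
    {f : I ⊕ J → Fin m → ℝ} {κ p F a : ℝ}
    (hκ : 0 ≤ κ) (hp : 2 ≤ p) (hF : 0 < F) (ha : 0 < a) (h : ∀ i, ∑ u, |f i u| ^ p ≤ F ^ p)
    (hB : κ ^ 2 * (40 * p * (Fintype.card I * Fintype.card J) * F ^ 4) ≤ a ^ 2 / 16) :
    ((Finset.univ.filter fun σ => ∃ u v, a / 2 < |S2 f κ σ u v|).card : ℝ) ≤ 2 ^ (Fintype.card (I × J)) / 20 := by
  classical
  obtain ⟨h1, h2⟩ := sqrtN (K := I)
  obtain ⟨h3, h4⟩ := sqrtN (K := J)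
  have hI := mom_le (fun i => f (Sum.inl i)) hp hF (fun i => h _)
  have hJ := mom_le (fun i => f (Sum.inr i)) hp hF (fun i => h _)
  set A := Real.sqrt (Fintype.card I) with hA
  set B := Real.sqrt (Fintype.card J) with hBd
  have hp0 : 0 < p := by linarith
  have hG : 0 < (A * F) * (B * F) := by positivity
  have ht0 : 0 < Real.sqrt (40 * p) * ((A * F) * (B * F)) := by positivity
  have ht2 : (Real.sqrt (40 * p) * ((A * F) * (B * F))) ^ 2 = 40 * p * ((A * F) * (B * F)) ^ 2 := by
    rw [mul_pow, Real.sq_sqrt (by positivity)]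
  have hmom : ∑ k : Fin m × Fin m, (∑ e : I × J, (f (Sum.inl e.1) k.1 * f (Sum.inr e.2) k.2) ^ 2) ^ (p / 2)
      ≤ ((A * F) * (B * F)) ^ p := by
    have e : ∀ u v, (∑ e : I × J, (f (Sum.inl e.1) u * f (Sum.inr e.2) v) ^ 2) ^ (p / 2)
       = (∑ i, f (Sum.inl i) u ^ 2) ^ (p / 2) * (∑ j, f (Sum.inr j) v ^ 2) ^ (p / 2) := by
      intro u v
      rw [← Real.mul_rpow (Finset.sum_nonneg fun _ _ => sq_nonneg _) (Finset.sum_nonneg fun _ _ => sq_nonneg _),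
        Finset.sum_mul_sum, Fintype.sum_prod_type]
      simp only [mul_pow]
    rw [Fintype.sum_prod_type]
    simp only [e]
    rw [← Finset.sum_mul_sum, Real.mul_rpow (by positivity) (by positivity)]
    apply mul_le_mul hI hJ
    · exact Finset.sum_nonneg fun _ _ => Real.rpow_nonneg (Finset.sum_nonneg fun _ _ => sq_nonneg _) _
    · positivity
  have htail := tail_all (fun (k : Fin m × Fin m) (e : I × J) => f (Sum.inl e.1) k.1 * f (Sum.inr e.2) k.2)
    hp hG ht0 ht2 hmom
  refine le_trans ?_ htail
  rw [Nat.cast_le]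
  apply Finset.card_le_card
  intro σ hσ
  simp only [Finset.mem_filter, Finset.mem_univ, true_and] at hσ ⊢
  by_contra hno
  push Not at hno
  obtain ⟨u, v, huv⟩ := hσ
  have hle : κ * (Real.sqrt (40 * p) * ((A * F) * (B * F))) ≤ a / 4 := by
    apply (pow_le_pow_iff_left₀ (by positivity) (by positivity) two_ne_zero).1
    rw [mul_pow, ht2]
    calc _ = κ ^ 2 * (40 * p * (A ^ 2 * B ^ 2) * F ^ 4) := by ring
      _ ≤ a ^ 2 / 16 := by rw [h2, h4]; exact hB
      _ = _ := by ring
  have n1 := mul_le_mul_of_nonneg_left (hno (u, v)) hκ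
  have n2 := mul_le_mul_of_nonneg_left (hno (v, u)) hκ
  rw [S2_apply] at huv
  have := abs_add_le (κ * (∑ e : I × J, sgn (σ e) * (f (Sum.inl e.1) u * f (Sum.inr e.2) v)))
      (κ * (∑ e : I × J, sgn (σ e) * (f (Sum.inl e.1) v * f (Sum.inr e.2) u)))
  rw [abs_mul, abs_mul, abs_of_nonneg hκ] at this
  simp only at n1 n2
  linarith

end schemes

section final
variable {m : ℕ}

lemma conclude {ι : Type*} [Fintype ι] [DecidableEq ι] [Nonempty ι] (hm : 1 ≤ m) (n r : ℕ)
    {a D ρ : ℝ} {lam : ℕ → ℝ} {φ : ℕ → Fin m → ℝ} (ha : 0 < a) (hD : 0 ≤ D)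
    (S : (ι → Bool) → Matrix (Fin m) (Fin m) ℝ)
    (h1 : ∀ σ e, n * hsNormSq (S σ - S (flip1 σ e)) ≤ 1 / 10 * (a ^ 2 * (m:ℝ) ^ 2))
    (h2 : ∀ σ σ', D * (hammingDist σ σ' : ℝ) ≤ hsNormSq (S σ - S σ'))
    (h3 : ((Finset.univ.filter fun σ => ∃ u v, a / 2 < |S σ u v|).card : ℝ) ≤ 2 ^ (Fintype.card ι) / 20)
    (h4 : ∀ σ, (S σ).IsSymm) (h5 : ∀ σ, (S σ).rank ≤ r)
    (h6 : ∀ σ, sobolevHSSq lam φ (S σ) ≤ ρ ^ 2 * (m : ℝ) ^ 2)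
    (Shat : (Fin n → Obs m) → Matrix (Fin m) (Fin m) ℝ) {E : ℝ} (hE : E ≤ D * Fintype.card ι / 80) :
    ∃ P, MemP m r ρ a lam φ P ∧ ENNReal.ofReal (1 / 11) ≤
      (Measure.pi fun _ : Fin n => P) {ω | E ≤ hsNormSq (Shat ω - regKernel m P)} := by
  obtain ⟨σ, hb, hp⟩ := main_assouad hm n ha hD S h1 h2 h3 Shat
  have hreg := PS_reg hm (S σ) ha hb
  refine ⟨PS (S σ) a, ⟨PS_prob hm _ a, PS_uniform hm _ a, PS_bdd _ ha, ?_, ?_, ?_⟩, ?_⟩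
  · rw [hreg]; exact h4 σ
  · rw [hreg]; exact h5 σ
  · rw [hreg]; exact h6 σ
  · rw [hreg]
    exact hp.trans (measure_mono fun ω hω => hE.trans hω)

lemma ON_of_idx {K : Type*} [DecidableEq K] {φ : ℕ → Fin m → ℝ} (h : OrthonormalFamily m φ) (idx : K → ℕ)
    (hinj : Function.Injective idx) (hmem : ∀ k, idx k ∈ Finset.Icc 1 m) : ON (fun k => φ (idx k)) := by
  intro i j
  rw [h _ (hmem i) _ (hmem j)]
  simp [hinj.eq_iff]

lemma core (hm : 1 ≤ m) {c : ℝ} {n r k0 l : ℕ} {ρ a p F δ : ℝ} {lam : ℕ → ℝ} {φ : ℕ → Fin m → ℝ}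
    (hn : 1 ≤ n) (hr : 1 ≤ r) (ha : 0 < a) (hp : 2 ≤ p)
    (hdat : IsEigenData m c lam φ k0) (hl1 : 1 ≤ l) (hlm : l ≤ m) (hF : 0 < F)
    (hFm : ∀ j ∈ Finset.Icc 1 m, ∑ u, |φ j u| ^ p ≤ F ^ p)
    (hδ : 0 ≤ δ) (d1 : δ * n ≤ a ^ 2 * (min r l : ℕ) * l) (d2 : lam l * δ ≤ ρ ^ 2)
    (d3 : δ * (p - 1) * (m:ℝ) ^ 2 * F ^ 4 * l ≤ a ^ 2 * (min r l : ℕ))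
    (Shat : (Fin n → Obs m) → Matrix (Fin m) (Fin m) ℝ) :
    ∃ P, MemP m r ρ a lam φ P ∧ ENNReal.ofReal (1 / 11) ≤
      (Measure.pi fun _ : Fin n => P) {ω | δ * (m:ℝ) ^ 2 / 100000 ≤ hsNormSq (Shat ω - regKernel m P)} := by
  have hm' : (0:ℝ) < m := by exact_mod_cast hm
  have hl' : (1:ℝ) ≤ l := by exact_mod_cast hl1
  have hlam0 : 0 ≤ lam l := hdat.nonneg l (by simp; omega)
  have hpp : p ≤ 2 * (p - 1) := by linarith
  -- Sobolev bound from a bound on the Hilbert-Schmidt norm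
  have hsob : ∀ S : Matrix (Fin m) (Fin m) ℝ, (∀ k, l < k → k ≤ m → S.mulVec (φ k) = 0) →
      hsNormSq S ≤ δ * (m:ℝ) ^ 2 → sobolevHSSq lam φ S ≤ ρ ^ 2 * (m : ℝ) ^ 2 := by
    intro S hS hh
    refine (sobolev_le hdat.orth hl1 hlm hdat.nonneg hdat.mono S hS).trans ?_
    calc _ ≤ lam l * (δ * (m:ℝ) ^ 2) := by gcongr
      _ = (lam l * δ) * (m:ℝ) ^ 2 := by ring
      _ ≤ _ := by gcongr
  have hperp : ∀ {K : Type} [Fintype K] (idx : K → ℕ) (C : K → K → ℝ), (∀ k, 1 ≤ idx k ∧ idx k ≤ l) →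
      ∀ k, l < k → k ≤ m → (SC (fun i => φ (idx i)) C).mulVec (φ k) = 0 := by
    intro K _ idx C hidx k hk hkm
    apply SC_mulVec
    intro j
    have := hidx j
    rw [hdat.orth (idx j) (by simp; omega) k (by simp; omega), if_neg (by omega)]
  rcases (show min r l = 1 ∨ 2 ≤ min r l by omega) with hM | hM
  · rw [hM] at d1 d3
    simp only [Nat.cast_one, mul_one] at d1 d3
    set κ := Real.sqrt (δ * (m:ℝ) ^ 2 / (5000 * (l:ℝ) ^ 2)) with hκd
    have hκ0 : 0 ≤ κ := Real.sqrt_nonneg _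
    have hκ : κ ^ 2 = δ * (m:ℝ) ^ 2 / (5000 * (l:ℝ) ^ 2) := Real.sq_sqrt (by positivity)
    have hκ' : κ ^ 2 * (l:ℝ) ^ 2 = δ * (m:ℝ) ^ 2 / 5000 := by rw [hκ]; field_simp
    let o : Fin l := ⟨0, by omega⟩
    have : Nonempty (Fin l) := ⟨o⟩
    set idx : Fin l → ℕ := fun i => i + 1 with hidx
    have hidxl : ∀ k, 1 ≤ idx k ∧ idx k ≤ l := fun k => by simp only [hidx]; omega
    have hidxm : ∀ k, idx k ∈ Finset.Icc 1 m := fun k => by have := hidxl k; simp; omega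
    have hON := ON_of_idx hdat.orth idx (fun i j h => by simp only [hidx] at h; ext; omega) hidxm
    refine conclude (D := 4 * κ ^ 2 * Fintype.card (Fin l)) hm n r ha (by positivity) (S1 (fun k => φ (idx k)) o κ) ?_
      (S1_sep hON o κ) ?_ ?_ ?_ ?_ Shat ?_
    · intro σ e
      refine (mul_le_mul_of_nonneg_left (S1_flip hON o κ σ e) (Nat.cast_nonneg n)).trans ?_
      rw [Fintype.card_fin]
      have : (l:ℝ) * (n * (144 * κ ^ 2 * l)) ≤ l * (1 / 10 * (a ^ 2 * (m:ℝ) ^ 2)) := by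
        calc _ = 144 / 5000 * (m:ℝ) ^ 2 * (δ * n) := by
              linear_combination 144 * n * hκ'
          _ ≤ 144 / 5000 * (m:ℝ) ^ 2 * (a ^ 2 * l) := by gcongr
          _ ≤ _ := by
            have : 0 ≤ (m:ℝ) ^ 2 * (a ^ 2 * l) := by positivity
            linarith
      exact le_of_mul_le_mul_left this (by linarith)
    · apply S1_bad o hκ0 hp hF ha (fun i => hFm _ (hidxm i))
      rw [Fintype.card_fin]
      calc _ = 576 / 5000 * (δ * p * (m:ℝ) ^ 2 * F ^ 4 * l) := by
            linear_combination 576 * p * l * F ^ 4 * hκ'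
        _ ≤ 576 / 5000 * (δ * (2 * (p - 1)) * (m:ℝ) ^ 2 * F ^ 4 * l) := by gcongr
        _ = 1152 / 5000 * (δ * (p - 1) * (m:ℝ) ^ 2 * F ^ 4 * l) := by ring
        _ ≤ 1152 / 5000 * a ^ 2 := by gcongr
        _ ≤ _ := by nlinarith [sq_nonneg a]
    · intro σ
      exact SC_symm _ _ fun i j => by ring
    · intro σ
      exact (S1_rank _ o κ σ).trans hr
    · intro σ
      apply hsob
      · exact hperp idx _ hidxl
      · refine (S1_hs hON o κ σ).trans ?_
        rw [Fintype.card_fin]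
        have : 0 ≤ δ * (m:ℝ) ^ 2 := by positivity
        nlinarith
    · rw [Fintype.card_fin]
      nlinarith
  · obtain ⟨s, hs1, hs2, hs3, hs4⟩ : ∃ s, 1 ≤ s ∧ 2 * s ≤ min r l ∧ min r l ≤ 3 * s ∧ l ≤ 2 * (l - s) :=
      ⟨min r l / 2, by omega, by omega, by omega, by omega⟩
    have hsl : 2 * s ≤ l := by omega
    have hs1' : (1:ℝ) ≤ s := by exact_mod_cast hs1
    have hs3' : ((min r l : ℕ) : ℝ) ≤ 3 * s := by exact_mod_cast hs3
    have hMl : ((min r l : ℕ) : ℝ) ≤ l := by exact_mod_cast min_le_right r l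
    obtain ⟨t, ht⟩ : ∃ t, t = l - s := ⟨_, rfl⟩
    rw [← ht] at hs4
    have ht1 : 1 ≤ t := by omega
    have hs4' : (l:ℝ) ≤ 2 * t := by exact_mod_cast hs4
    have htl : (t:ℝ) ≤ l := by exact_mod_cast (show t ≤ l by omega)
    set κ := Real.sqrt (δ * (m:ℝ) ^ 2 / (5000 * (s * l))) with hκd
    have hκ0 : 0 ≤ κ := Real.sqrt_nonneg _
    have hκ : κ ^ 2 = δ * (m:ℝ) ^ 2 / (5000 * (s * l)) := Real.sq_sqrt (by positivity)
    have hκ' : κ ^ 2 * (s * l) = δ * (m:ℝ) ^ 2 / 5000 := by rw [hκ]; field_simp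
    have : Nonempty (Fin s) := ⟨⟨0, by omega⟩⟩
    have : Nonempty (Fin t) := ⟨⟨0, by omega⟩⟩
    set idx : Fin s ⊕ Fin t → ℕ := Sum.elim (fun i => (i:ℕ) + 1) (fun j => s + (j:ℕ) + 1) with hidx
    have hidxl : ∀ k, 1 ≤ idx k ∧ idx k ≤ l := by
      rintro (k | k) <;> simp only [hidx, Sum.elim_inl, Sum.elim_inr] <;> omega
    have hidxm : ∀ k, idx k ∈ Finset.Icc 1 m := fun k => by have := hidxl k; simp; omega
    have hinj : Function.Injective idx := by
      rintro (i | i) (j | j) h <;> simp only [hidx, Sum.elim_inl, Sum.elim_inr] at h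
      · congr 1; ext; omega
      · omega
      · omega
      · congr 1; ext; omega
    have hON := ON_of_idx hdat.orth idx hinj hidxm
    have hsep := S2_sep hON κ
    refine conclude (D := 8 * κ ^ 2) hm n r ha (by positivity) (S2 (fun k => φ (idx k)) κ) ?_
      (fun σ σ' => (hsep σ σ').ge) ?_ ?_ ?_ ?_ Shat ?_
    · intro σ e
      rw [hsep, hamming_flip, mul_one]
      have : (s * l:ℝ) * (n * (8 * κ ^ 2)) ≤ (s * l:ℝ) * (1 / 10 * (a ^ 2 * (m:ℝ) ^ 2)) := by
        calc _ = 8 / 5000 * (m:ℝ) ^ 2 * (δ * n) := by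
              linear_combination 8 * n * hκ'
          _ ≤ 8 / 5000 * (m:ℝ) ^ 2 * (a ^ 2 * (3 * s) * l) := by
              refine mul_le_mul_of_nonneg_left (d1.trans ?_) (by positivity)
              gcongr
          _ ≤ _ := by
            have : 0 ≤ (m:ℝ) ^ 2 * (a ^ 2 * s * l) := by positivity
            linarith
      exact le_of_mul_le_mul_left this (by positivity)
    · apply S2_bad hκ0 hp hF ha (fun i => hFm _ (hidxm i))
      rw [Fintype.card_fin, Fintype.card_fin]
      have d4 : δ * (p - 1) * (m:ℝ) ^ 2 * F ^ 4 ≤ a ^ 2 := by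
        have : (δ * (p - 1) * (m:ℝ) ^ 2 * F ^ 4) * l ≤ a ^ 2 * l := d3.trans (by gcongr)
        exact le_of_mul_le_mul_right this (by linarith)
      calc _ ≤ κ ^ 2 * (40 * p * (s * l) * F ^ 4) := by gcongr
        _ = 40 / 5000 * (δ * p * (m:ℝ) ^ 2 * F ^ 4) := by
            linear_combination 40 * p * F ^ 4 * hκ'
        _ ≤ 40 / 5000 * (δ * (2 * (p - 1)) * (m:ℝ) ^ 2 * F ^ 4) := by gcongr
        _ = 80 / 5000 * (δ * (p - 1) * (m:ℝ) ^ 2 * F ^ 4) := by ring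
        _ ≤ 80 / 5000 * a ^ 2 := by gcongr
        _ ≤ _ := by nlinarith [sq_nonneg a]
    · intro σ
      exact SC_symm _ _ (C2_symm κ σ)
    · intro σ
      refine (S2_rank _ κ σ).trans ?_
      rw [Fintype.card_fin]; omega
    · intro σ
      apply hsob
      · exact hperp idx _ hidxl
      · rw [S2_hs hON, Fintype.card_fin, Fintype.card_fin]
        have h0 : 0 ≤ δ * (m:ℝ) ^ 2 := by positivity
        have : κ ^ 2 * (s * t) ≤ κ ^ 2 * (s * l) := by gcongr
        nlinarith
    · rw [Fintype.card_prod, Fintype.card_fin, Fintype.card_fin]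
      push_cast
      have : κ ^ 2 * (s * l) ≤ κ ^ 2 * (s * (2 * t)) := by gcongr
      nlinarith

lemma Qp_ge {p : ℝ} {φ : ℕ → Fin m → ℝ} {j : ℕ} (hj : j ∈ Finset.Icc 1 m) :
    ((∑ v, |Real.sqrt m * φ j v| ^ p) / m) ^ (2 / p) ≤ Qp m p φ := by
  unfold Qp
  set g : ℕ → ℝ := fun j => ((∑ v, |Real.sqrt m * φ j v| ^ p) / m) ^ (2 / p) with hg
  have hg0 : ∀ j, 0 ≤ g j := fun j => by positivity
  have hbdd : BddAbove (Set.range fun j => ⨆ (_ : j ∈ Finset.Icc 1 m), g j) := by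
    refine ⟨∑ j ∈ Finset.Icc 1 m, g j, ?_⟩
    rintro _ ⟨i, rfl⟩
    by_cases hi : i ∈ Finset.Icc 1 m
    · simp only [ciSup_pos hi]
      exact Finset.single_le_sum (fun j _ => hg0 j) hi
    · have : IsEmpty (i ∈ Finset.Icc 1 m) := ⟨hi⟩
      simp only [Real.iSup_of_isEmpty]
      exact Finset.sum_nonneg fun j _ => hg0 j
  have := le_ciSup hbdd j
  simp only [ciSup_pos hj] at this
  exact this

lemma Qp_mom (hm : 1 ≤ m) {p : ℝ} (hp : 2 ≤ p) {φ : ℕ → Fin m → ℝ} {j : ℕ} (hj : j ∈ Finset.Icc 1 m) :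
    ∑ u, |φ j u| ^ p ≤ ((m:ℝ) ^ (1 / p) * Real.sqrt (Qp m p φ / m)) ^ p := by
  have hm' : (0:ℝ) < m := by exact_mod_cast hm
  have hp0 : 0 < p := by linarith
  have h := Qp_ge (p := p) (φ := φ) hj
  set Q := Qp m p φ
  set A := ∑ u, |φ j u| ^ p with hA
  have hA0 : 0 ≤ A := Finset.sum_nonneg fun _ _ => by positivity
  have e : ∑ v, |Real.sqrt m * φ j v| ^ p = (m:ℝ) ^ (p / 2) * A := by
    rw [hA, Finset.mul_sum]
    refine Finset.sum_congr rfl fun v _ => ?_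
    rw [abs_mul, abs_of_nonneg (Real.sqrt_nonneg _), Real.mul_rpow (Real.sqrt_nonneg _) (abs_nonneg _),
      Real.sqrt_eq_rpow, ← Real.rpow_mul hm'.le]
    congr 2; ring
  rw [e] at h
  have hB0 : 0 ≤ (m:ℝ) ^ (p / 2) * A / m := by positivity
  have hQ0 : 0 ≤ Q := le_trans (by positivity) h
  have h2 : (m:ℝ) ^ (p / 2) * A / m ≤ Q ^ (p / 2) := by
    have := Real.rpow_le_rpow (by positivity) h (show 0 ≤ p / 2 by positivity)
    rw [← Real.rpow_mul hB0] at this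
    have e1 : 2 / p * (p / 2) = 1 := by field_simp
    rwa [e1, Real.rpow_one] at this
  rw [Real.mul_rpow (by positivity) (Real.sqrt_nonneg _), ← Real.rpow_mul hm'.le, Real.sqrt_eq_rpow,
    ← Real.rpow_mul (by positivity)]
  have e2 : 1 / p * p = 1 := by field_simp
  have e3 : 1 / 2 * p = p / 2 := by ring
  rw [e2, e3, Real.rpow_one, Real.div_rpow hQ0 hm'.le]
  rw [div_le_iff₀ hm'] at h2
  rw [← mul_div_assoc, le_div_iff₀ (by positivity)]
  linarith

lemma Qp_pos (hm : 1 ≤ m) {p : ℝ} (hp : 2 ≤ p) {φ : ℕ → Fin m → ℝ} (h : OrthonormalFamily m φ) :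
    0 < Qp m p φ := by
  have hm' : (0:ℝ) < m := by exact_mod_cast hm
  by_contra hcon
  push Not at hcon
  have h1 : 1 ∈ Finset.Icc 1 m := by simp; omega
  have h2 := Qp_mom hm hp (φ := φ) h1
  rw [Real.sqrt_eq_zero_of_nonpos (div_nonpos_of_nonpos_of_nonneg hcon hm'.le), mul_zero,
    Real.zero_rpow (by linarith)] at h2
  have h3 := h 1 h1 1 h1
  rw [if_pos rfl] at h3
  have h4 : ∀ v, φ 1 v = 0 := by
    intro v
    have : |φ 1 v| ^ p ≤ 0 :=
      (Finset.single_le_sum (f := fun u => |φ 1 u| ^ p) (fun u _ => by positivity) (Finset.mem_univ v)).trans h2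
    by_contra hne
    have : 0 < |φ 1 v| ^ p := Real.rpow_pos_of_pos (abs_pos.2 hne) _
    linarith
  simp [h4] at h3

end final

/-- **Theorem 2 (minimax lower bound, dense case).** -/
theorem minimax_lower_bound_dense (c : ℝ) (hc : 1 ≤ c) :
    ∃ c₁ > (0 : ℝ), ∃ c₂ > (0 : ℝ),
      ∀ (m n r k0 : ℕ) (ρ a p : ℝ) (lam : ℕ → ℝ) (φ : ℕ → Fin m → ℝ),
        1 ≤ m → 1 ≤ n → 1 ≤ r → r ≤ m → 0 < ρ → 0 < a → 2 ≤ p →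
        IsEigenData m c lam φ k0 →
        ∀ Shat : (Fin n → Obs m) → Matrix (Fin m) (Fin m) ℝ,
          (∀ u v : Fin m, Measurable fun ω => Shat ω u v) →
          ENNReal.ofReal c₂ ≤
            ⨆ (P : Measure (Obs m)) (_ : MemP m r ρ a lam φ P),
              (Measure.pi fun _ : Fin n => P)
                {ω | ENNReal.ofReal c₁ * delta1 m n r (min k0 32) ρ a p (Qp m p φ) lam ≤
                  ENNReal.ofReal (l2PiSq (Shat ω - regKernel m P))} := by
  refine ⟨1 / 100000, by norm_num, 1 / 11, by norm_num, ?_⟩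
  intro m n r k0 ρ a p lam φ hm hn hr hrm hρ ha hp hdat Shat _
  have hm' : (0:ℝ) < m := by exact_mod_cast hm
  have hn' : (0:ℝ) < n := by exact_mod_cast hn
  have hQ := Qp_pos hm hp hdat.orth
  obtain ⟨hk1, hk2, hk3⟩ := hdat.k0_mem
  set Q := Qp m p φ with hQd
  set g : ℕ → ℝ≥0∞ := fun l => min (ENNReal.ofReal (a ^ 2 * (min r l : ℝ) * (l : ℝ) / n))
      (min (ENNReal.ofReal (ρ ^ 2) / ENNReal.ofReal (lam l))
        (ENNReal.ofReal
          ((1 / (p - 1)) * (1 / Q ^ 2) * (a ^ 2 * (min r l : ℝ) / l) *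
            ((m : ℝ) ^ ((4 : ℝ) / p))⁻¹))) with hg
  obtain ⟨l, hl, hmax⟩ := Finset.exists_max_image (Finset.Icc (min k0 32) m) g
    ⟨m, by simp only [Finset.mem_Icc]; omega⟩
  have hdelta : delta1 m n r (min k0 32) ρ a p Q lam ≤ g l := iSup₂_le hmax
  simp only [Finset.mem_Icc] at hl
  have hl1 : 1 ≤ l := by omega
  have hl' : (0:ℝ) < l := by exact_mod_cast hl1
  have g1 : g l ≤ ENNReal.ofReal (a ^ 2 * (min r l : ℝ) * (l : ℝ) / n) := min_le_left _ _
  have g2 : g l ≤ ENNReal.ofReal (ρ ^ 2) / ENNReal.ofReal (lam l) := (min_le_right _ _).trans (min_le_left _ _)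
  have g3 : g l ≤ ENNReal.ofReal ((1 / (p - 1)) * (1 / Q ^ 2) * (a ^ 2 * (min r l : ℝ) / l) *
            ((m : ℝ) ^ ((4 : ℝ) / p))⁻¹) := (min_le_right _ _).trans (min_le_right _ _)
  have hfin : g l ≠ ⊤ := ne_top_of_le_ne_top ENNReal.ofReal_ne_top g1
  have hp1 : 0 < p - 1 := by linarith
  have hmin0 : (0:ℝ) ≤ min (r:ℝ) l := le_min (Nat.cast_nonneg _) (Nat.cast_nonneg _)
  have hcast : ((min r l : ℕ) : ℝ) = min (r:ℝ) l := Nat.cast_min r l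
  set δ := (g l).toReal with hδd
  have hδ0 : 0 ≤ δ := ENNReal.toReal_nonneg
  have hgδ : g l = ENNReal.ofReal δ := (ENNReal.ofReal_toReal hfin).symm
  have d1 : δ ≤ a ^ 2 * (min r l : ℝ) * (l : ℝ) / n := ENNReal.toReal_le_of_le_ofReal (by positivity) g1
  have d3 := ENNReal.toReal_le_of_le_ofReal (by positivity) g3
  rw [← hδd] at d3
  have d2 : lam l * δ ≤ ρ ^ 2 := by
    rcases (hdat.nonneg l (by simp only [Finset.mem_Icc]; omega)).eq_or_lt with h0 | h0
    · rw [← h0, zero_mul]; positivity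
    · rw [hgδ, ENNReal.le_div_iff_mul_le (Or.inl (by simpa using h0)) (Or.inl ENNReal.ofReal_ne_top),
        ← ENNReal.ofReal_mul hδ0, ENNReal.ofReal_le_ofReal_iff (by positivity)] at g2
      linarith
  set F := (m:ℝ) ^ (1 / p) * Real.sqrt (Q / m) with hFd
  have hF : 0 < F := by positivity
  have hF4 : F ^ 4 = (m:ℝ) ^ (4 / p) * (Q ^ 2 / (m:ℝ) ^ 2) := by
    rw [hFd, mul_pow]
    congr 1
    · rw [← Real.rpow_natCast, ← Real.rpow_mul hm'.le]
      congr 1; push_cast; ring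
    · have : Real.sqrt (Q / m) ^ 2 = Q / m := Real.sq_sqrt (by positivity)
      rw [show 4 = 2 * 2 by norm_num, pow_mul, this, div_pow]
  obtain ⟨P, hP, hprob⟩ := core hm hn hr ha hp hdat hl1 hl.2 hF (fun j hj => Qp_mom hm hp hj) hδ0
    (by rw [hcast]; rwa [le_div_iff₀ hn'] at d1) d2
    (by
      rw [hcast, hF4]
      have hmp : 0 < (m:ℝ) ^ (4 / p) := by positivity
      calc _ = δ * ((p - 1) * Q ^ 2 * l * (m:ℝ) ^ (4 / p)) := by field_simp
        _ ≤ _ := mul_le_mul_of_nonneg_right d3 (by positivity)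
        _ = _ := by field_simp) Shat
  refine le_trans ?_ (le_iSup₂ P hP)
  refine hprob.trans (measure_mono fun ω hω => ?_)
  simp only [Set.mem_ofPred_eq] at hω ⊢
  calc _ ≤ ENNReal.ofReal (1 / 100000) * ENNReal.ofReal δ := by
        rw [← hgδ]; gcongr
    _ = ENNReal.ofReal (1 / 100000 * δ) := (ENNReal.ofReal_mul (by norm_num)).symm
    _ ≤ _ := by
        apply ENNReal.ofReal_le_ofReal
        unfold l2PiSq
        rw [le_div_iff₀ (by positivity)]
        linarith

end
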